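/- arXiv:2004.07550 — 6 statements merged into one kernel-verified Lean document; each statement's English description precedes it below -/
import Mathlib

section
/- Hopf Trace Formula: Let (C_q, ∂_q) for q = 0, …, n be a chain complex of finite-dimensional vector spaces over a field (∂_q : C_q → C_{q−1} linear with ∂_{q−1} ∘ ∂_q = 0, and C_q = 0 for q < 0 and q > n), and let f_q : C_q → C_q be a chain map (f_{q−1} ∘ ∂_q = ∂_q ∘ f_q for all q). Let H_q = ker ∂_q / im ∂_{q+1} be the homology and f_{*,q} : H_q → H_q the endomorphism induced by f_q. Then ∑_{q=0}^n (−1)^q trace(f_q) = ∑_{q=0}^n (−1)^q trace(f_{*,q}). -/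
/-!
The trace is additive along endomorphisms of short exact sequences. Let `Z_q` and `B_q` be the
cycles and boundaries, and put `b_q = tr(f_q | B_q)`, `b_{-1} = 0`. The sequences
`0 → Z_q → C_q → B_{q-1} → 0` and `0 → B_q → Z_q → H_q → 0` give
`tr(f_q) = tr(f_{*,q}) + b_q + b_{q-1}`. In the alternating sum the boundary terms telescope,
leaving `(-1)^n b_n`, which vanishes because `B_n` is the image of `C_{n+1} = 0`.
-/

open LinearMap

section TraceAdditivity

variable {R M N P : Type*} [CommRing R] [AddCommGroup M] [Module R M] [AddCommGroup N] [Module R N]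
  [AddCommGroup P] [Module R P]

theorem trace_eq_add_of_exact [Module.Free R M] [Module.Finite R M] [Module.Free R P]
    [Module.Finite R P] {i : M →ₗ[R] N} {p : N →ₗ[R] P} (hi : Function.Injective i)
    (hip : Function.Exact i p) (hp : Function.Surjective p) {a : M →ₗ[R] M} {b : N →ₗ[R] N}
    {c : P →ₗ[R] P} (hab : b ∘ₗ i = i ∘ₗ a) (hbc : p ∘ₗ b = c ∘ₗ p) :
    trace R N b = trace R M a + trace R P c := by
  obtain ⟨s, hs⟩ := Module.projective_lifting_property p .id hp
  obtain ⟨e, hie, hpe⟩ := hip.splitSurjectiveEquiv hi ⟨s, hs⟩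
  have : Module.Free R N := .of_equiv e.symm
  have : Module.Finite R N := .equiv e.symm
  obtain ⟨r, s, hri, hps, hid⟩ : ∃ (r : N →ₗ[R] M) (s : P →ₗ[R] N),
      r ∘ₗ i = .id ∧ p ∘ₗ s = .id ∧ i ∘ₗ r + s ∘ₗ p = .id := by
    refine ⟨fst R M P ∘ₗ e, e.symm ∘ₗ inr R M P, ?_, ?_, ?_⟩
    · ext; simp [hie]
    · ext; simp [hpe]
    · ext; apply e.injective; simp [hie, hpe]
  calc trace R N b = trace R N (b ∘ₗ (i ∘ₗ r + s ∘ₗ p)) := by rw [hid, comp_id]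
    _ = trace R N (i ∘ₗ (a ∘ₗ r)) + trace R N ((b ∘ₗ s) ∘ₗ p) := by
      rw [comp_add, map_add, ← comp_assoc, hab, comp_assoc, ← comp_assoc p]
    _ = trace R M ((a ∘ₗ r) ∘ₗ i) + trace R P (p ∘ₗ (b ∘ₗ s)) := by
      rw [trace_comp_comm' (a ∘ₗ r) i, trace_comp_comm' p (b ∘ₗ s)]
    _ = trace R M a + trace R P c := by
      rw [comp_assoc, hri, comp_id, ← comp_assoc, hbc, comp_assoc, hps, comp_id]

theorem trace_eq_trace_restrict_ker_add_trace_restrict_range (d : M →ₗ[R] N)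
    [Module.Free R (ker d)] [Module.Finite R (ker d)] [Module.Free R (range d)]
    [Module.Finite R (range d)] {f : M →ₗ[R] M} {g : N →ₗ[R] N} (hfg : g ∘ₗ d = d ∘ₗ f)
    (hker : ∀ x ∈ ker d, f x ∈ ker d) (hrange : ∀ y ∈ range d, g y ∈ range d) :
    trace R M f = trace R _ (f.restrict hker) + trace R _ (g.restrict hrange) := by
  refine trace_eq_add_of_exact (i := (ker d).subtype) (p := d.rangeRestrict)
    (Submodule.subtype_injective _) ?_ d.surjective_rangeRestrict rfl ?_
  · rw [exact_iff, ker_rangeRestrict, Submodule.range_subtype]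
  · ext x
    exact (LinearMap.congr_fun hfg x).symm

theorem trace_restrict_eq_trace_restrict_add_trace_mapQ {p q : Submodule R M} (hpq : p ≤ q)
    [Module.Free R p] [Module.Finite R p] [Module.Free R (q ⧸ p.comap q.subtype)]
    [Module.Finite R (q ⧸ p.comap q.subtype)] {f : M →ₗ[R] M} (hp : ∀ x ∈ p, f x ∈ p)
    (hq : ∀ x ∈ q, f x ∈ q) :
    trace R q (f.restrict hq) = trace R p (f.restrict hp) +
      trace R _ ((p.comap q.subtype).mapQ (p.comap q.subtype) (f.restrict hq)
        fun x hx ↦ hp x hx) := by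
  refine trace_eq_add_of_exact (i := Submodule.inclusion hpq) (p := Submodule.mkQ _)
    (Submodule.inclusion_injective hpq) ?_ (Submodule.mkQ_surjective _) rfl rfl
  rw [exact_iff, Submodule.ker_mkQ, Submodule.range_inclusion]

end TraceAdditivity

section Homology

variable {R : Type*} [CommRing R] {C : ℕ → Type*} [∀ q, AddCommGroup (C q)] [∀ q, Module R (C q)]

/-- The cycles of a complex `⋯ → C 1 → C 0`, where `d q : C (q + 1) → C q` and every element of
`C 0` is a cycle. -/
def cycles (d : ∀ q, C (q + 1) →ₗ[R] C q) : ∀ q, Submodule R (C q)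
  | 0 => ⊤
  | q + 1 => ker (d q)

/-- The homology of a complex, with the boundaries `range (d q)` regarded as a submodule of the
cycles. -/
abbrev Homology (d : ∀ q, C (q + 1) →ₗ[R] C q) (q : ℕ) : Type _ :=
  cycles d q ⧸ (range (d q)).comap (cycles d q).subtype

variable {d : ∀ q, C (q + 1) →ₗ[R] C q} {f : ∀ q, C q →ₗ[R] C q}

theorem range_le_cycles (hdd : ∀ q, d q ∘ₗ d (q + 1) = 0) : ∀ q, range (d q) ≤ cycles d q
  | 0 => le_top
  | q + 1 => range_le_ker_iff.2 (hdd q)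

theorem map_mem_range (hf : ∀ q, f q ∘ₗ d q = d q ∘ₗ f (q + 1)) (q : ℕ) :
    ∀ x ∈ range (d q), f q x ∈ range (d q) := by
  rintro _ ⟨y, rfl⟩
  exact ⟨f (q + 1) y, (LinearMap.congr_fun (hf q) y).symm⟩

theorem map_mem_cycles (hf : ∀ q, f q ∘ₗ d q = d q ∘ₗ f (q + 1)) :
    ∀ q, ∀ x ∈ cycles d q, f q x ∈ cycles d q
  | 0, _, _ => Submodule.mem_top
  | q + 1, x, (hx : d q x = 0) => show d q (f (q + 1) x) = 0 by
    rw [← comp_apply, ← hf, comp_apply, hx, map_zero]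

/-- The endomorphism of the homology in degree `q` induced by a chain map `f`. -/
def homologyMap (hf : ∀ q, f q ∘ₗ d q = d q ∘ₗ f (q + 1)) (q : ℕ) :
    Homology d q →ₗ[R] Homology d q :=
  Submodule.mapQ _ _ ((f q).restrict (map_mem_cycles hf q)) fun x hx ↦ map_mem_range hf q x hx

theorem eq_homologyMap (hf : ∀ q, f q ∘ₗ d q = d q ∘ₗ f (q + 1)) {q : ℕ}
    {F : Homology d q →ₗ[R] Homology d q}
    (hF : ∀ z w : cycles d q, f q z = w →
      F (Submodule.Quotient.mk z) = Submodule.Quotient.mk w) :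
    F = homologyMap hf q :=
  Submodule.linearMap_qext _ <| LinearMap.ext fun z ↦ hF z _ rfl

end Homology

section HopfTrace

variable {K : Type*} [Field K] {C : ℕ → Type*} [∀ q, AddCommGroup (C q)] [∀ q, Module K (C q)]
  {d : ∀ q, C (q + 1) →ₗ[K] C q} {f : ∀ q, C q →ₗ[K] C q}

theorem trace_restrict_cycles_eq_add (hdd : ∀ q, d q ∘ₗ d (q + 1) = 0)
    (hf : ∀ q, f q ∘ₗ d q = d q ∘ₗ f (q + 1)) (q : ℕ) [FiniteDimensional K (C q)] :
    trace K _ ((f q).restrict (map_mem_cycles hf q)) =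
      trace K _ ((f q).restrict (map_mem_range hf q)) + trace K _ (homologyMap hf q) :=
  trace_restrict_eq_trace_restrict_add_trace_mapQ (range_le_cycles hdd q) _ _

theorem trace_zero_eq_trace_homologyMap_add (hdd : ∀ q, d q ∘ₗ d (q + 1) = 0)
    (hf : ∀ q, f q ∘ₗ d q = d q ∘ₗ f (q + 1)) [FiniteDimensional K (C 0)] :
    trace K _ (f 0) =
      trace K _ (homologyMap hf 0) + trace K _ ((f 0).restrict (map_mem_range hf 0)) := by
  rw [← trace_restrict_eq_of_forall_mem (cycles d 0) (f 0) (fun _ ↦ Submodule.mem_top)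
    (map_mem_cycles hf 0), trace_restrict_cycles_eq_add hdd hf, add_comm]

theorem trace_succ_eq_trace_homologyMap_add_add (hdd : ∀ q, d q ∘ₗ d (q + 1) = 0)
    (hf : ∀ q, f q ∘ₗ d q = d q ∘ₗ f (q + 1)) (q : ℕ) [FiniteDimensional K (C (q + 1))] :
    trace K _ (f (q + 1)) =
      trace K _ (homologyMap hf (q + 1)) +
        trace K _ ((f (q + 1)).restrict (map_mem_range hf (q + 1))) +
        trace K _ ((f q).restrict (map_mem_range hf q)) := by
  have hker : trace K _ (f (q + 1)) =
      trace K _ ((f (q + 1)).restrict (map_mem_cycles hf (q + 1))) +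
        trace K _ ((f q).restrict (map_mem_range hf q)) :=
    trace_eq_trace_restrict_ker_add_trace_restrict_range (d q) (hf q) _ _
  rw [hker, trace_restrict_cycles_eq_add hdd hf, add_comm (trace K (range _) _)]

theorem hopf_trace_formula_general (n : ℕ) (hC : ∀ q ≤ n, FiniteDimensional K (C q))
    (hdd : ∀ q, d q ∘ₗ d (q + 1) = 0) (hf : ∀ q, f q ∘ₗ d q = d q ∘ₗ f (q + 1)) :
    ∑ q ∈ Finset.range (n + 1), (-1 : K) ^ q * trace K (C q) (f q) =
      ∑ q ∈ Finset.range (n + 1), (-1 : K) ^ q * trace K _ (homologyMap hf q) +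
        (-1 : K) ^ n * trace K _ ((f n).restrict (map_mem_range hf n)) := by
  induction n with
  | zero =>
    have := hC 0 le_rfl
    simpa using trace_zero_eq_trace_homologyMap_add hdd hf
  | succ n ih =>
    have := hC (n + 1) le_rfl
    rw [Finset.sum_range_succ, ih fun q hq ↦ hC q (hq.trans n.le_succ),
      trace_succ_eq_trace_homologyMap_add_add hdd hf, Finset.sum_range_succ _ (n + 1)]
    ring

end HopfTrace

/-- **Hopf Trace Formula.** Let `(C_q, ∂_q)`, `q = 0, …, n`, be a chain complex of
finite-dimensional vector spaces over a field `K` (with `C_q = 0` for `q > n`; here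
`d q : C (q+1) →ₗ C q` denotes `∂_{q+1}`, so that `∂_{q-1} ∘ ∂_q = 0` reads
`d q ∘ d (q+1) = 0`), and let `f_q : C_q → C_q` be a chain map (`f_q ∘ ∂_{q+1} = ∂_{q+1} ∘ f_{q+1}`).
Let `Z q` be the cycles (`Z 0 = C 0` and `Z (q+1) = ker (d q)`), so the homology is
`H_q = Z q / (B q)` where `B q = im ∂_{q+1} = range (d q)`, and let `F q : H_q → H_q` be the
endomorphism induced by `f q` (characterized by commuting with the quotient projection).
Then `∑_{q=0}^n (−1)^q trace(f_q) = ∑_{q=0}^n (−1)^q trace(F_q)`. -/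
theorem hopf_trace_formula {K : Type*} [Field K] (n : ℕ)
    (C : ℕ → Type*) [∀ q, AddCommGroup (C q)] [∀ q, Module K (C q)]
    [∀ q, FiniteDimensional K (C q)]
    (hCtop : ∀ q, n < q → Subsingleton (C q))
    (d : ∀ q, C (q + 1) →ₗ[K] C q)
    (hdd : ∀ q, (d q).comp (d (q + 1)) = 0)
    (f : ∀ q, C q →ₗ[K] C q)
    (hf : ∀ q, (f q).comp (d q) = (d q).comp (f (q + 1)))
    (Z : ∀ q, Submodule K (C q))
    (hZzero : Z 0 = ⊤)
    (hZsucc : ∀ q, Z (q + 1) = LinearMap.ker (d q))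
    (F : ∀ q, ((Z q) ⧸ (LinearMap.range (d q)).comap (Z q).subtype) →ₗ[K]
        ((Z q) ⧸ (LinearMap.range (d q)).comap (Z q).subtype))
    (hF : ∀ q (z w : Z q), f q (z : C q) = (w : C q) →
        F q (Submodule.Quotient.mk z) = Submodule.Quotient.mk w) :
    ∑ q ∈ Finset.range (n + 1), (-1 : K) ^ q * LinearMap.trace K (C q) (f q) =
      ∑ q ∈ Finset.range (n + 1), (-1 : K) ^ q * LinearMap.trace K _ (F q) := by
  obtain rfl : Z = cycles d := by
    funext q
    cases q with
    | zero => exact hZzero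
    | succ q => exact hZsucc q
  obtain rfl : F = homologyMap hf := funext fun q ↦ eq_homologyMap hf (hF q)
  have hrestrict : (f n).restrict (map_mem_range hf n) = 0 := by
    have := hCtop (n + 1) n.lt_succ_self
    ext ⟨_, y, rfl⟩
    simp [Subsingleton.elim y 0]
  rw [hopf_trace_formula_general n (fun _ _ ↦ inferInstance) hdd hf, hrestrict, map_zero, mul_zero,
    add_zero]
end

section
/- Let (X,κ) be a finite digital image and let f, g : X → X be continuous self-maps that are strongly homotopic (f ≃* g). Then L(f) = L(g). -/
/-- A function `f : (X,κ) → (Y,λ)` between digital images is (digitally) continuous if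
whenever `x, y` are `κ`-adjacent, `f x = f y` or `f x, f y` are `λ`-adjacent. -/
def DigCont {X Y : Type*} (κ : X → X → Prop) (lam : Y → Y → Prop) (f : X → Y) : Prop :=
  ∀ x y, κ x y → f x = f y ∨ lam (f x) (f y)

/-- A clique of `(X,κ)`: a nonempty set of mutually `κ`-adjacent points. -/
def IsClique {X : Type*} (κ : X → X → Prop) (S : Finset X) : Prop :=
  S.Nonempty ∧ ∀ x ∈ S, ∀ y ∈ S, x ≠ y → κ x y

/-- `x` is an approximate fixed point of `f`: `f x = x` or `f x` is adjacent to `x`. -/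
def ApproxFix {X : Type*} (κ : X → X → Prop) (f : X → X) (x : X) : Prop :=
  f x = x ∨ κ x (f x)

/-- A strong homotopy between `f, g : (X,κ) → (Y,λ)` is `H : X × {0,…,m} → Y` with
`H(x,0) = f(x)`, `H(x,m) = g(x)`, such that whenever (`x = x′` or `x,x′` are `κ`-adjacent)
and `|t − t′| ≤ 1`, with `(x,t) ≠ (x′,t′)`, the values `H(x,t), H(x′,t′)` are equal or
`λ`-adjacent.  `f ≃* g` iff such an `H` exists. -/
def StrongHomotopic {X Y : Type*} (κ : X → X → Prop) (lam : Y → Y → Prop)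
    (f g : X → Y) : Prop :=
  ∃ (m : ℕ) (H : X → ℕ → Y),
    (∀ x, H x 0 = f x) ∧ (∀ x, H x m = g x) ∧
    ∀ x x' (t t' : ℕ), t ≤ m → t' ≤ m → (x = x' ∨ κ x x') →
      (t = t' ∨ t + 1 = t' ∨ t' + 1 = t) → (x ≠ x' ∨ t ≠ t') →
      (H x t = H x' t' ∨ lam (H x t) (H x' t'))

/-- The permutation induced by `f` on a finite set `S` with `f(S) = S`. -/
noncomputable def fixedSetPerm {X : Type*} [DecidableEq X] (f : X → X) (S : Finset X)
    (h : S.image f = S) : Equiv.Perm {x // x ∈ S} :=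
  Equiv.ofBijective
    (fun x => ⟨f x.1, by
      have hx : f x.1 ∈ S.image f := Finset.mem_image_of_mem f x.2
      rwa [h] at hx⟩)
    (by
      rw [Fintype.bijective_iff_surjective_and_card]
      refine ⟨fun y => ?_, rfl⟩
      have hy : (y : X) ∈ S.image f := by rw [h]; exact y.2
      obtain ⟨x, hx, hfx⟩ := Finset.mem_image.mp hy
      exact ⟨⟨x, hx⟩, Subtype.ext hfx⟩)

open Classical in
/-- The simplicial Lefschetz number `L(f) = ∑_S (−1)^{|S|−1} sgn(f|_S)`, summing over all
cliques `S` of `(X,κ)` with `f(S) = S`. -/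
noncomputable def simpLef {X : Type*} [Fintype X] [DecidableEq X]
    (κ : X → X → Prop) (f : X → X) : ℤ :=
  ∑ S : Finset X,
    if h : IsClique κ S ∧ S.image f = S then
      (-1 : ℤ) ^ (S.card - 1) * ((Equiv.Perm.sign (fixedSetPerm f S h.2) : ℤˣ) : ℤ)
    else 0

open Classical in
/-- The simplicial Euler characteristic `χ(X) = ∑_{q≥0} (−1)^q s_q`, where `s_q` is the
number of cliques of `X` with exactly `q+1` points; equivalently `∑_S (−1)^{|S|−1}` over
all cliques `S`. -/
noncomputable def simpEuler {X : Type*} [Fintype X] (κ : X → X → Prop) : ℤ :=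
  ∑ S : Finset X, if IsClique κ S then (-1 : ℤ) ^ (S.card - 1) else 0

/-!
Give a self-map `k` the sign `mapSign k`: the sign of the permutation `k`, or `0` when `k` is not
bijective. A set `S` contributes to `L(f)` through the sign of the map which is `f` on `S` and the
identity elsewhere, so that `L(f)` becomes a sum over all cliques: the sign vanishes unless
`f(S) = S`.

Two consecutive stages of a strong homotopy can be mixed arbitrarily without losing continuity, so
the second is reached from the first by changing one value at a time, and it suffices to change `f`
at a single point `a`, to a value `c`. By Cramer's rule the sign of `k` is
the sum over `t` of the signs of the maps obtained from `k` by redirecting `t` to `c`. For a clique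
`S ∋ a` the term `t = a` is the contribution of `S` to the new Lefschetz number. For `t ≠ a`
whether `t` belongs to `S` does not affect the redirected map, and whenever its sign is nonzero
`S ∪ {t}` is a clique if and only if `S \ {t}` is; the contributions of these two sets are opposite,
so the error terms cancel in pairs.
-/

open Finset Function Matrix
open scoped Relator

theorem sum_eq_zero_of_insert_eq_neg {X M : Type*} [Fintype X] [DecidableEq X]
    [AddCommGroup M] {F : Finset X → M} (t : X)
    (hF : ∀ S, t ∉ S → F (insert t S) = -F S) : ∑ S, F S = 0 := by
  rw [← powerset_univ, ← insert_erase (mem_univ t), sum_powerset_insert (notMem_erase t univ),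
    ← sum_add_distrib]
  refine sum_eq_zero fun S hS => ?_
  rw [hF S fun ht => notMem_erase t univ (mem_powerset.1 hS ht), add_neg_cancel]

theorem vecMul_dotProduct_cramer {n R : Type*} [Fintype n] [DecidableEq n] [CommRing R]
    (A : Matrix n n R) (v b : n → R) :
    (v ᵥ* A) ⬝ᵥ A.cramer b = A.det * (v ⬝ᵥ b) := by
  rw [← dotProduct_mulVec, mulVec_cramer, dotProduct_smul, smul_eq_mul]

section MapSign

variable {X : Type*} [Fintype X] [DecidableEq X]

/-- The sign of a self-map of a finite type: the sign of the permutation if the map is bijective,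
and `0` otherwise. It is encoded as the determinant of the matrix whose column `y` is the basis
vector at `k y`, which makes Cramer's rule available. -/
def mapSign (k : X → X) : ℤ :=
  ((1 : Matrix X X ℤ).submatrix id k).det

theorem mapSign_coe_perm (σ : Equiv.Perm X) : mapSign σ = (Equiv.Perm.sign σ : ℤ) := by
  simp [mapSign, det_permute']

theorem injective_of_mapSign_ne_zero {k : X → X} (hk : mapSign k ≠ 0) : Injective k := by
  intro x y hxy
  by_contra hne
  exact hk (det_zero_of_column_eq hne fun i => by simp [one_apply, hxy])

theorem sum_mapSign_update (k : X → X) (c : X) : ∑ t, mapSign (update k t c) = mapSign k := by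
  have col_sums : 1 ᵥ* (1 : Matrix X X ℤ).submatrix id k = 1 := by
    ext y
    simp [vecMul, dotProduct, one_apply]
  have updateCol_eq (t : X) : (1 : Matrix X X ℤ).submatrix id (update k t c) =
      ((1 : Matrix X X ℤ).submatrix id k).updateCol t (Pi.single c 1) := by
    ext x y
    rcases eq_or_ne y t with rfl | hy
    · simp [one_apply, Pi.single_apply]
    · simp [one_apply, hy]
  simpa [mapSign, updateCol_eq, cramer_apply, col_sums, one_dotProduct] using
    vecMul_dotProduct_cramer ((1 : Matrix X X ℤ).submatrix id k) 1 (Pi.single c 1)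

end MapSign

section InvariantSets

variable {X : Type*} [DecidableEq X]

theorem image_eq_of_injective_piecewise_id {f : X → X} {S : Finset X}
    (h : Injective (S.piecewise f id)) : S.image f = S := by
  have maps_to : S.image f ⊆ S := by
    refine image_subset_iff.2 fun x hx => ?_
    by_contra hfx
    have hfix : f x = x := h (by simp [hx, hfx])
    exact hfx (hfix.symm ▸ hx)
  have inj_on : Set.InjOn f S := fun x hx y hy hxy =>
    h (by simpa [mem_coe.1 hx, mem_coe.1 hy] using hxy)
  exact eq_of_subset_of_card_le maps_to (card_image_of_injOn inj_on).ge

theorem coe_ofSubtype_fixedSetPerm (f : X → X) (S : Finset X) (h : S.image f = S) :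
    ⇑(Equiv.Perm.ofSubtype (fixedSetPerm f S h)) = S.piecewise f id := by
  ext x
  by_cases hx : x ∈ S
  · rw [Equiv.Perm.ofSubtype_apply_of_mem _ hx, piecewise_eq_of_mem _ _ _ hx]
    rfl
  · rw [Equiv.Perm.ofSubtype_apply_of_not_mem _ hx, piecewise_eq_of_notMem _ _ _ hx, id]

variable [Fintype X]

theorem mapSign_piecewise_id_of_image_eq (f : X → X) (S : Finset X) (h : S.image f = S) :
    mapSign (S.piecewise f id) = (Equiv.Perm.sign (fixedSetPerm f S h) : ℤ) := by
  rw [← coe_ofSubtype_fixedSetPerm f S h, mapSign_coe_perm, Equiv.Perm.sign_ofSubtype]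

theorem mapSign_piecewise_id_of_image_ne {f : X → X} {S : Finset X} (h : S.image f ≠ S) :
    mapSign (S.piecewise f id) = 0 := by
  contrapose! h
  exact image_eq_of_injective_piecewise_id (injective_of_mapSign_ne_zero h)

theorem mapSign_piecewise_id_eq_add_sum (f : X → X) {S : Finset X} {a : X} (ha : a ∈ S) (c : X) :
    mapSign (S.piecewise f id) = mapSign (S.piecewise (update f a c) id) +
      ∑ t ∈ univ.erase a, mapSign (update (S.piecewise f id) t c) := by
  rw [← update_piecewise_of_mem _ _ _ ha,
    add_sum_erase _ (fun t => mapSign (update (S.piecewise f id) t c)) (mem_univ a),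
    sum_mapSign_update]

end InvariantSets

section Cliques

/-- Two points are equal or mutually adjacent. For symmetric `κ` this is the relation "equal or
adjacent" of digital topology; requiring adjacency in both directions makes it symmetric for
every `κ`, with the same cliques. -/
def AdjEq {X : Type*} (κ : X → X → Prop) (x y : X) : Prop :=
  (x = y ∨ κ x y) ∧ (y = x ∨ κ y x)

open Classical in
/-- The contribution `(-1)^dim` of a set of points to the simplicial Euler characteristic, which is
`0` unless the set is a clique. -/
noncomputable def cliqueSign {X : Type*} (κ : X → X → Prop) (S : Finset X) : ℤ :=
  if IsClique κ S then (-1) ^ (#S - 1) else 0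

variable {X Y : Type*} {κ : X → X → Prop} {lam : Y → Y → Prop} {S T : Finset X}

theorem AdjEq.refl (κ : X → X → Prop) (x : X) : AdjEq κ x x :=
  ⟨Or.inl rfl, Or.inl rfl⟩

theorem AdjEq.symm {x y : X} (h : AdjEq κ x y) : AdjEq κ y x :=
  And.symm h

theorem isClique_iff_adjEq :
    IsClique κ S ↔ S.Nonempty ∧ ∀ x ∈ S, ∀ y ∈ S, AdjEq κ x y := by
  refine and_congr_right fun _ => ⟨fun h x hx y hy => ?_, fun h x hx y hy hxy => ?_⟩
  · exact ⟨or_iff_not_imp_left.2 (h x hx y hy), or_iff_not_imp_left.2 (h y hy x hx)⟩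
  · exact (h x hx y hy).1.resolve_left hxy

theorem IsClique.subset (hT : IsClique κ T) (hST : S ⊆ T) (hS : S.Nonempty) : IsClique κ S :=
  ⟨hS, fun x hx y hy => hT.2 x (hST hx) y (hST hy)⟩

theorem IsClique.insert_image [DecidableEq Y] (hS : IsClique κ S) {f : X → Y}
    (hf : (AdjEq κ ⇒ AdjEq lam) f f) {a : X} {c : Y} (ha : a ∈ S)
    (hc : ∀ x, AdjEq κ x a → AdjEq lam (f x) c) : IsClique lam (insert c (S.image f)) := by
  rw [isClique_iff_adjEq] at hS ⊢
  have adj_c : ∀ x ∈ S, AdjEq lam (f x) c := fun x hx => hc x (hS.2 x hx a ha)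
  refine ⟨insert_nonempty c _, ?_⟩
  simp only [forall_mem_insert, forall_mem_image]
  exact ⟨⟨AdjEq.refl lam c, fun x hx => (adj_c x hx).symm⟩,
    fun x hx => ⟨adj_c x hx, fun y hy => hf (hS.2 x hx y hy)⟩⟩

variable [DecidableEq X]

theorem isClique_insert_iff_of_image_update_eq {f : X → X} (hf : (AdjEq κ ⇒ AdjEq κ) f f)
    {a c t : X} (ha : a ∈ S) (hc : ∀ x, AdjEq κ x a → AdjEq κ (f x) c)
    (h : (insert t S).image (update f t c) = insert t S) :
    IsClique κ (insert t S) ↔ IsClique κ S := by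
  refine ⟨fun hS => hS.subset (subset_insert t S) ⟨a, ha⟩, fun hS => ?_⟩
  refine (hS.insert_image hf ha hc).subset ?_ (insert_nonempty t S)
  rw [← h, image_insert, update_self]
  refine insert_subset (mem_insert_self _ _) (image_subset_iff.2 fun x hx => ?_)
  rcases eq_or_ne x t with rfl | hxt
  · simp
  · simpa [hxt] using Or.inr ⟨x, hx, rfl⟩

theorem piecewise_liftFun_adjEq {f g : X → Y} (hf : (AdjEq κ ⇒ AdjEq lam) f f)
    (hg : (AdjEq κ ⇒ AdjEq lam) g g) (hfg : (AdjEq κ ⇒ AdjEq lam) f g) (S : Finset X) :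
    (AdjEq κ ⇒ AdjEq lam) (S.piecewise g f) (S.piecewise g f) := by
  intro x y hxy
  by_cases hx : x ∈ S <;> by_cases hy : y ∈ S <;> simp only [hx, hy, not_false_eq_true,
    piecewise_eq_of_mem, piecewise_eq_of_notMem]
  exacts [hg hxy, (hfg hxy.symm).symm, hfg hxy, hf hxy]

theorem cliqueSign_insert {t : X} (hS : S.Nonempty) (ht : t ∉ S)
    (h : IsClique κ (insert t S) ↔ IsClique κ S) :
    cliqueSign κ (insert t S) = -cliqueSign κ S := by
  obtain ⟨n, hn⟩ := Nat.exists_eq_add_one.2 hS.card_pos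
  by_cases hclique : IsClique κ S <;>
    simp [cliqueSign, h, hclique, card_insert_of_notMem ht, hn, pow_succ]

end Cliques

section Lefschetz

variable {X : Type*} [Fintype X] [DecidableEq X] {κ : X → X → Prop}

theorem simpLef_eq_sum_cliqueSign_mul_mapSign (κ : X → X → Prop) (f : X → X) :
    simpLef κ f = ∑ S, cliqueSign κ S * mapSign (S.piecewise f id) := by
  refine sum_congr rfl fun S _ => ?_
  by_cases himage : S.image f = S
  · by_cases hS : IsClique κ S <;>
      simp [cliqueSign, hS, himage, mapSign_piecewise_id_of_image_eq]
  · simp [himage, mapSign_piecewise_id_of_image_ne]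

theorem cliqueSign_insert_mul_mapSign_update {f : X → X} (hf : (AdjEq κ ⇒ AdjEq κ) f f)
    {S : Finset X} {a c t : X} (ha : a ∈ S) (ht : t ∉ S)
    (hc : ∀ x, AdjEq κ x a → AdjEq κ (f x) c) :
    cliqueSign κ (insert t S) * mapSign (update ((insert t S).piecewise f id) t c) =
      -(cliqueSign κ S * mapSign (update (S.piecewise f id) t c)) := by
  have same_map : update ((insert t S).piecewise f id) t c = update (S.piecewise f id) t c := by
    rw [piecewise_insert, update_idem]
  by_cases hsign : mapSign (update (S.piecewise f id) t c) = 0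
  · simp [same_map, hsign]
  · have image_eq : (insert t S).image (update f t c) = insert t S := by
      refine image_eq_of_injective_piecewise_id (injective_of_mapSign_ne_zero ?_)
      rwa [← update_piecewise_of_mem _ _ _ (mem_insert_self t S), same_map]
    rw [same_map, cliqueSign_insert ⟨a, ha⟩ ht
      (isClique_insert_iff_of_image_update_eq hf ha hc image_eq), neg_mul]

theorem simpLef_update {f : X → X} (hf : (AdjEq κ ⇒ AdjEq κ) f f) {a c : X}
    (hc : ∀ x, AdjEq κ x a → AdjEq κ (f x) c) : simpLef κ (update f a c) = simpLef κ f := by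
  let error (t : X) (S : Finset X) : ℤ :=
    if a ∈ S then cliqueSign κ S * mapSign (update (S.piecewise f id) t c) else 0
  have expand (S : Finset X) : cliqueSign κ S * mapSign (S.piecewise f id) =
      cliqueSign κ S * mapSign (S.piecewise (update f a c) id) +
        ∑ t ∈ univ.erase a, error t S := by
    by_cases ha : a ∈ S
    · simp only [error, if_pos ha, ← mul_sum]
      rw [mapSign_piecewise_id_eq_add_sum f ha c, mul_add]
    · have piecewise_eq : S.piecewise (update f a c) id = S.piecewise f id :=
        S.piecewise_congr (fun x hx => update_of_ne (ne_of_mem_of_not_mem hx ha) c f) fun _ _ => rfl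
      simp [error, ha, piecewise_eq]
  have cancel : ∀ t ∈ univ.erase a, ∑ S, error t S = 0 := by
    refine fun t hta => sum_eq_zero_of_insert_eq_neg t fun S ht => ?_
    by_cases ha : a ∈ S
    · simp only [error, if_pos ha, if_pos (mem_insert_of_mem ha)]
      exact cliqueSign_insert_mul_mapSign_update hf ha ht hc
    · simp [error, ha, (ne_of_mem_erase hta).symm]
  simp only [simpLef_eq_sum_cliqueSign_mul_mapSign]
  rw [sum_congr rfl fun S _ => expand S, sum_add_distrib, sum_comm, sum_eq_zero cancel, add_zero]

theorem simpLef_eq_of_liftFun_adjEq {f g : X → X} (hf : (AdjEq κ ⇒ AdjEq κ) f f)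
    (hg : (AdjEq κ ⇒ AdjEq κ) g g) (hfg : (AdjEq κ ⇒ AdjEq κ) f g) :
    simpLef κ f = simpLef κ g := by
  suffices ∀ A : Finset X, simpLef κ (A.piecewise g f) = simpLef κ f by
    simpa using (this univ).symm
  intro A
  induction A using Finset.induction_on with
  | empty => rw [piecewise_empty]
  | insert a A _ ih =>
    rw [piecewise_insert, simpLef_update (piecewise_liftFun_adjEq hf hg hfg A), ih]
    intro x hx
    by_cases hxA : x ∈ A
    · simpa [hxA] using hg hx
    · simpa [hxA] using hfg hx

end Lefschetz

theorem StrongHomotopic.exists_liftFun_adjEq {X Y : Type*} {κ : X → X → Prop}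
    {lam : Y → Y → Prop} {f g : X → Y} (h : StrongHomotopic κ lam f g) :
    ∃ (m : ℕ) (F : ℕ → X → Y), F 0 = f ∧ F m = g ∧
      (∀ t ≤ m, (AdjEq κ ⇒ AdjEq lam) (F t) (F t)) ∧
      ∀ t < m, (AdjEq κ ⇒ AdjEq lam) (F t) (F (t + 1)) := by
  obtain ⟨m, H, hH_zero, hH_m, hH⟩ := h
  refine ⟨m, fun t x => H x t, funext hH_zero, funext hH_m, fun t ht x y hxy => ?_,
    fun t ht x y hxy => ?_⟩
  · rcases eq_or_ne x y with rfl | hne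
    · exact AdjEq.refl lam _
    · exact ⟨hH x y t t ht ht hxy.1 (Or.inl rfl) (Or.inl hne),
        hH y x t t ht ht hxy.2 (Or.inl rfl) (Or.inl hne.symm)⟩
  · exact ⟨hH x y t (t + 1) ht.le ht hxy.1 (by simp) (by simp),
      hH y x (t + 1) t ht ht.le hxy.2 (by simp) (by simp)⟩

theorem simpLef_eq_of_strongHomotopic_general {X : Type*} [Fintype X] [DecidableEq X]
    (κ : X → X → Prop) (f g : X → X) (hfg : StrongHomotopic κ κ f g) :
    simpLef κ f = simpLef κ g := by
  obtain ⟨m, F, rfl, rfl, hcont, hstep⟩ := hfg.exists_liftFun_adjEq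
  suffices ∀ t ≤ m, simpLef κ (F 0) = simpLef κ (F t) from this m le_rfl
  intro t ht
  induction t with
  | zero => rfl
  | succ t ih =>
    have ht' : t ≤ m := (Nat.lt_of_succ_le ht).le
    exact (ih ht').trans <|
      simpLef_eq_of_liftFun_adjEq (hcont t ht') (hcont (t + 1) ht) (hstep t ht)

/-- Let `(X,κ)` be a finite digital image and `f, g : X → X` continuous self-maps that are
strongly homotopic. Then `L(f) = L(g)`. -/
theorem simpLef_eq_of_strongHomotopic {X : Type*} [Fintype X] [DecidableEq X]
    (κ : X → X → Prop) (hsym : Symmetric κ) (hirr : Irreflexive κ)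
    (f g : X → X) (hf : DigCont κ κ f) (hg : DigCont κ κ g)
    (hfg : StrongHomotopic κ κ f g) :
    simpLef κ f = simpLef κ g := by
  exact simpLef_eq_of_strongHomotopic_general κ f g hfg
end

section
/- Let (X,κ) be a finite digital image and f : X → X a continuous self-map with L(f) ≠ 0. Then every continuous self-map g : X → X that is strongly homotopic to f has a fixed point or has at least two distinct approximate fixed points. -/
section Stable

variable {X : Type*} [DecidableEq X] {f : X → X} {C S T Z : Finset X} {a x y : X}

theorem iterate_mem_of_image_subset (hC : C.image f ⊆ C) (hx : x ∈ C) (n : ℕ) : f^[n] x ∈ C :=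
  Set.MapsTo.iterate (s := (C : Set X)) (Finset.image_subset_iff.1 hC) n hx

theorem image_iterate_of_image_eq (hS : S.image f = S) (n : ℕ) : S.image f^[n] = S := by
  induction n with
  | zero => exact Finset.image_id
  | succ n ih => rw [Function.iterate_succ, ← Finset.image_image, hS, ih]

theorem image_sdiff_of_image_eq (hS : S.image f = S) (hT : T.image f = T) (hTS : T ⊆ S) :
    (S \ T).image f = S \ T := by
  have f_injOn : Set.InjOn f S := Finset.injOn_of_card_image_eq (by rw [hS])
  rw [Finset.image_sdiff_of_injOn f_injOn hTS, hS, hT]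

theorem image_union_of_image_eq (hS : S.image f = S) (hT : T.image f = T) :
    (S ∪ T).image f = S ∪ T := by
  rw [Finset.image_union, hS, hT]

/-- The cycles of `f`, encoded as the minimal nonempty sets mapped into themselves by `f`. -/
def IsMinimalStable (f : X → X) (Z : Finset X) : Prop :=
  Minimal (fun T : Finset X ↦ T.Nonempty ∧ T.image f ⊆ T) Z

namespace IsMinimalStable

theorem nonempty (hZ : IsMinimalStable f Z) : Z.Nonempty := hZ.prop.1

theorem image_subset (hZ : IsMinimalStable f Z) : Z.image f ⊆ Z := hZ.prop.2

theorem subset_of_image_subset (hZ : IsMinimalStable f Z) (hT : T.Nonempty) (hTf : T.image f ⊆ T)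
    (hTZ : T ⊆ Z) : Z ⊆ T :=
  hZ.le_of_le ⟨hT, hTf⟩ hTZ

theorem image_eq (hZ : IsMinimalStable f Z) : Z.image f = Z :=
  hZ.image_subset.antisymm <| hZ.subset_of_image_subset (hZ.nonempty.image f)
    (Finset.image_subset_image hZ.image_subset) hZ.image_subset

theorem subset_or_disjoint (hZ : IsMinimalStable f Z) (hS : S.image f ⊆ S) :
    Z ⊆ S ∨ Disjoint S Z := by
  rw [or_iff_not_imp_right, Finset.not_disjoint_iff_nonempty_inter]
  intro hSZ
  have inter_stable : (S ∩ Z).image f ⊆ S ∩ Z :=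
    (Finset.image_inter_subset f S Z).trans (Finset.inter_subset_inter hS hZ.image_subset)
  exact (hZ.subset_of_image_subset hSZ inter_stable Finset.inter_subset_right).trans
    Finset.inter_subset_left

end IsMinimalStable

open Classical in
theorem image_filter_iterate_subset (hC : C.image f ⊆ C) :
    (C.filter fun x ↦ ∃ n, f^[n] a = x).image f ⊆ C.filter fun x ↦ ∃ n, f^[n] a = x := by
  simp only [Finset.image_subset_iff, Finset.mem_filter, and_imp, forall_exists_index]
  rintro _ hx n rfl
  exact ⟨hC (Finset.mem_image_of_mem f hx), n + 1, Function.iterate_succ_apply' f n a⟩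

theorem exists_isMinimalStable_forall_exists_iterate_eq (hC : C.image f ⊆ C) (ha : a ∈ C) :
    ∃ Z, IsMinimalStable f Z ∧ ∀ z ∈ Z, ∃ n, f^[n] a = z := by
  classical
  obtain ⟨Z, hZC, hZ⟩ := exists_minimal_le_of_wellFoundedLT
    (fun T : Finset X ↦ T.Nonempty ∧ T.image f ⊆ T) _
    ⟨⟨a, Finset.mem_filter.2 ⟨ha, 0, rfl⟩⟩, image_filter_iterate_subset hC⟩
  exact ⟨Z, hZ, fun z hz ↦ (Finset.mem_filter.1 (hZC hz)).2⟩

theorem IsMinimalStable.exists_iterate_eq (hZ : IsMinimalStable f Z) (hx : x ∈ Z) (hy : y ∈ Z) :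
    ∃ n, f^[n] x = y := by
  classical
  have Z_subset : Z ⊆ Z.filter fun y ↦ ∃ n, f^[n] x = y :=
    hZ.subset_of_image_subset ⟨x, Finset.mem_filter.2 ⟨hx, 0, rfl⟩⟩
      (image_filter_iterate_subset hZ.image_subset) (Finset.filter_subset _ _)
  exact (Finset.mem_filter.1 (Z_subset hy)).2

end Stable

section FixedSetPerm

variable {X : Type*} [DecidableEq X] {f : X → X} {S T Z : Finset X}

theorem coe_fixedSetPerm_pow (hS : S.image f = S) (n : ℕ) (x : S) :
    ((fixedSetPerm f S hS ^ n) x : X) = f^[n] x := by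
  have h : Function.Semiconj Subtype.val (fixedSetPerm f S hS) f := fun _ ↦ rfl
  rw [← Equiv.Perm.iterate_eq_pow]
  exact h.iterate_right n x

theorem sign_fixedSetPerm_union (hS : S.image f = S) (hT : T.image f = T) (hST : Disjoint S T) :
    Equiv.Perm.sign (fixedSetPerm f (S ∪ T) (image_union_of_image_eq hS hT)) =
      Equiv.Perm.sign (fixedSetPerm f S hS) * Equiv.Perm.sign (fixedSetPerm f T hT) := by
  rw [← Equiv.Perm.sign_sumCongr]
  refine (Equiv.Perm.sign_eq_sign_of_equiv _ _ (Equiv.Finset.union S T hST) ?_).symm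
  rintro (x | x) <;> rfl

theorem sign_eq_of_forall_sameCycle {α : Type*} [Fintype α] [DecidableEq α] [Nonempty α]
    {σ : Equiv.Perm α} (hσ : ∀ x y, σ.SameCycle x y) :
    Equiv.Perm.sign σ = -(-1) ^ Fintype.card α := by
  rcases subsingleton_or_nontrivial α with _ | _
  · have : Unique α := uniqueOfSubsingleton (Classical.arbitrary α)
    simp [Subsingleton.elim σ 1]
  · have apply_ne : ∀ x, σ x ≠ x := fun x hx ↦ by
      obtain ⟨y, hyx⟩ := exists_ne x
      exact hyx ((hσ x y).eq_of_left hx).symm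
    have σ_isCycle : σ.IsCycle := ⟨Classical.arbitrary α, apply_ne _, fun y _ ↦ hσ _ y⟩
    have support_eq : σ.support = Finset.univ := by ext x; simp [apply_ne x]
    rw [σ_isCycle.sign, support_eq, Finset.card_univ]

theorem IsMinimalStable.sign_fixedSetPerm (hZ : IsMinimalStable f Z) :
    Equiv.Perm.sign (fixedSetPerm f Z hZ.image_eq) = -(-1) ^ Z.card := by
  have := hZ.nonempty.to_subtype
  rw [sign_eq_of_forall_sameCycle, Fintype.card_coe]
  intro x y
  obtain ⟨n, hn⟩ := hZ.exists_iterate_eq x.2 y.2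
  exact ⟨n, Subtype.ext <| by rw [zpow_natCast, coe_fixedSetPerm_pow, hn]⟩

end FixedSetPerm

section LefschetzWeight

open scoped symmDiff

variable {X : Type*} [DecidableEq X] {f g : X → X} {S T Z : Finset X}

/-- The contribution of `S` to `-L(f)`, extended by `0` to the sets with `f(S) ≠ S`. The exponent is
`|S|` rather than `|S| - 1`, which makes the weight multiplicative over disjoint unions and gives
the empty set weight `1`. -/
noncomputable def lefschetzWeight (f : X → X) (S : Finset X) : ℤ :=
  if h : S.image f = S then (-1) ^ S.card * (Equiv.Perm.sign (fixedSetPerm f S h) : ℤ) else 0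

theorem lefschetzWeight_of_image_eq (hS : S.image f = S) :
    lefschetzWeight f S = (-1) ^ S.card * (Equiv.Perm.sign (fixedSetPerm f S hS) : ℤ) :=
  dif_pos hS

theorem image_eq_of_lefschetzWeight_ne_zero (hS : lefschetzWeight f S ≠ 0) : S.image f = S :=
  of_not_not fun h ↦ hS (dif_neg h)

theorem lefschetzWeight_congr (hfg : Set.EqOn f g S) :
    lefschetzWeight f S = lefschetzWeight g S := by
  have image_eq : S.image f = S.image g := Finset.image_congr hfg
  by_cases hf : S.image f = S
  · have hg : S.image g = S := image_eq ▸ hf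
    have perm_eq : fixedSetPerm f S hf = fixedSetPerm g S hg := by ext x; exact hfg x.2
    rw [lefschetzWeight_of_image_eq hf, lefschetzWeight_of_image_eq hg, perm_eq]
  · rw [lefschetzWeight, lefschetzWeight, dif_neg hf, dif_neg (image_eq ▸ hf)]

theorem lefschetzWeight_union (hS : S.image f = S) (hT : T.image f = T) (hST : Disjoint S T) :
    lefschetzWeight f (S ∪ T) = lefschetzWeight f S * lefschetzWeight f T := by
  rw [lefschetzWeight_of_image_eq hS, lefschetzWeight_of_image_eq hT,
    lefschetzWeight_of_image_eq (image_union_of_image_eq hS hT), sign_fixedSetPerm_union hS hT hST,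
    Finset.card_union_of_disjoint hST]
  push_cast
  ring

namespace IsMinimalStable

theorem lefschetzWeight_eq (hZ : IsMinimalStable f Z) : lefschetzWeight f Z = -1 := by
  rw [lefschetzWeight_of_image_eq hZ.image_eq, hZ.sign_fixedSetPerm]
  push_cast
  rw [mul_neg, ← mul_pow, neg_one_mul, neg_neg, one_pow]

theorem image_symmDiff (hZ : IsMinimalStable f Z) (hS : S.image f = S) :
    (S ∆ Z).image f = S ∆ Z := by
  rcases hZ.subset_or_disjoint hS.le with hZS | hSZ
  · rw [symmDiff_of_ge hZS, image_sdiff_of_image_eq hS hZ.image_eq hZS]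
  · rw [Finset.symmDiff_eq_union hSZ, image_union_of_image_eq hS hZ.image_eq]

theorem lefschetzWeight_symmDiff (hZ : IsMinimalStable f Z) (hS : S.image f = S) :
    lefschetzWeight f (S ∆ Z) = -lefschetzWeight f S := by
  rcases hZ.subset_or_disjoint hS.le with hZS | hSZ
  · have hS_eq : lefschetzWeight f S = lefschetzWeight f (S \ Z) * lefschetzWeight f Z := by
      rw [← lefschetzWeight_union (image_sdiff_of_image_eq hS hZ.image_eq hZS) hZ.image_eq
        Finset.sdiff_disjoint, Finset.sdiff_union_of_subset hZS]
    rw [symmDiff_of_ge hZS, hS_eq, hZ.lefschetzWeight_eq, mul_neg_one, neg_neg]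
  · rw [Finset.symmDiff_eq_union hSZ, lefschetzWeight_union hS hZ.image_eq hSZ,
      hZ.lefschetzWeight_eq, mul_neg_one]

theorem sum_lefschetzWeight_eq_zero (hZ : IsMinimalStable f Z) {𝒮 : Finset (Finset X)}
    (h𝒮 : ∀ S ∈ 𝒮, S.image f = S → S ∆ Z ∈ 𝒮) : ∑ S ∈ 𝒮, lefschetzWeight f S = 0 := by
  rw [← Finset.sum_filter_of_ne fun S _ ↦ image_eq_of_lefschetzWeight_ne_zero]
  refine Finset.sum_involution (fun S _ ↦ S ∆ Z) ?_ ?_ ?_ ?_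
  · intro S hS
    rw [hZ.lefschetzWeight_symmDiff (Finset.mem_filter.1 hS).2, add_neg_cancel]
  · intro S _ _
    rw [Ne, symmDiff_eq_left]
    exact hZ.nonempty.ne_empty
  · intro S hS
    obtain ⟨hS𝒮, hSf⟩ := Finset.mem_filter.1 hS
    exact Finset.mem_filter.2 ⟨h𝒮 S hS𝒮 hSf, hZ.image_symmDiff hSf⟩
  · exact fun S _ ↦ symmDiff_symmDiff_cancel_right Z S

end IsMinimalStable

end LefschetzWeight

section Contiguous

variable {X Y : Type*} {κ : X → X → Prop} {lam : Y → Y → Prop}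

theorem IsClique.mono {S T : Finset X} (hS : IsClique κ S) (hTS : T ⊆ S) (hT : T.Nonempty) :
    IsClique κ T :=
  ⟨hT, fun x hx y hy ↦ hS.2 x (hTS hx) y (hTS hy)⟩

theorem isClique_of_forall_exists_isClique {T : Finset X} (hT : T.Nonempty)
    (h : ∀ x ∈ T, ∀ y ∈ T, ∃ S, IsClique κ S ∧ x ∈ S ∧ y ∈ S) : IsClique κ T := by
  refine ⟨hT, fun x hx y hy hxy ↦ ?_⟩
  obtain ⟨S, hS, hxS, hyS⟩ := h x hx y hy
  exact hS.2 x hxS y hyS hxy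

/-- Simplicial maps between the clique complexes of two digital images. -/
def IsSimplicial [DecidableEq Y] (κ : X → X → Prop) (lam : Y → Y → Prop) (f : X → Y) : Prop :=
  ∀ S, IsClique κ S → IsClique lam (S.image f)

/-- Contiguity of two simplicial maps between clique complexes. Since `f(S)` and `g(S)` are subsets
of `f(S) ∪ g(S)`, it contains that `f` and `g` are simplicial. -/
def Contiguous [DecidableEq Y] (κ : X → X → Prop) (lam : Y → Y → Prop) (f g : X → Y) : Prop :=
  ∀ S, IsClique κ S → IsClique lam (S.image f ∪ S.image g)

theorem IsSimplicial.iterate [DecidableEq X] {f : X → X} (hf : IsSimplicial κ κ f) (n : ℕ) :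
    IsSimplicial κ κ f^[n] := by
  induction n with
  | zero => exact fun S hS ↦ by rwa [Function.iterate_zero, Finset.image_id]
  | succ n ih =>
    intro S hS
    rw [Function.iterate_succ, ← Finset.image_image]
    exact ih _ (hf S hS)

namespace Contiguous

variable [DecidableEq Y] {f g u v : X → Y}

theorem of_forall_eq_or (hfg : Contiguous κ lam f g) (hu : ∀ x, u x = f x ∨ u x = g x)
    (hv : ∀ x, v x = f x ∨ v x = g x) : Contiguous κ lam u v := by
  have image_subset {w : X → Y} (hw : ∀ x, w x = f x ∨ w x = g x) (S : Finset X) :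
      S.image w ⊆ S.image f ∪ S.image g := by
    intro y hy
    obtain ⟨x, hx, rfl⟩ := Finset.mem_image.1 hy
    rcases hw x with h | h <;> rw [h]
    · exact Finset.mem_union_left _ (Finset.mem_image_of_mem f hx)
    · exact Finset.mem_union_right _ (Finset.mem_image_of_mem g hx)
  intro S hS
  exact (hfg S hS).mono (Finset.union_subset (image_subset hu S) (image_subset hv S))
    ((hS.1.image u).mono Finset.subset_union_left)

theorem isSimplicial_left (hfg : Contiguous κ lam f g) : IsSimplicial κ lam f :=
  fun S hS ↦ (hfg S hS).mono Finset.subset_union_left (hS.1.image f)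

theorem symm (hfg : Contiguous κ lam f g) : Contiguous κ lam g f :=
  hfg.of_forall_eq_or (fun _ ↦ .inr rfl) fun _ ↦ .inl rfl

theorem exists_isClique_superset [Finite X] [DecidableEq X] {f g : X → X}
    (hfg : Contiguous κ κ f g) {S : Finset X} (hS : IsClique κ S) (hSf : S.image f = S) :
    ∃ C, IsClique κ C ∧ S ⊆ C ∧ C.image f ⊆ C ∧ C.image g ⊆ C := by
  let Φ (C : Finset X) : Finset X := C.image f ∪ C.image g
  have Φ_mono {C D : Finset X} (hCD : C ⊆ D) : Φ C ⊆ Φ D :=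
    Finset.union_subset_union (Finset.image_subset_image hCD) (Finset.image_subset_image hCD)
  have S_subset_Φ : S ⊆ Φ S := hSf.ge.trans Finset.subset_union_left
  obtain ⟨C, hSC, hC⟩ := Finite.exists_le_maximal
    (p := fun C ↦ IsClique κ C ∧ C ⊆ Φ C) ⟨hS, S_subset_Φ⟩
  have Φ_subset : Φ C ⊆ C := hC.le_of_ge ⟨hfg C hC.prop.1, Φ_mono hC.prop.2⟩ hC.prop.2
  exact ⟨C, hC.prop.1, hSC, Finset.union_subset_iff.1 Φ_subset⟩

end Contiguous

end Contiguous

section Lefschetz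

variable {X : Type*} [DecidableEq X] {κ : X → X → Prop} {f g : X → X} {C S T : Finset X} {a : X}

theorem IsSimplicial.isClique_of_forall_mem_or_iterate (hf : IsSimplicial κ κ f)
    (hC : IsClique κ C) (hCf : C.image f ⊆ C) (ha : a ∈ C) (hS : IsClique κ (insert a S))
    (hSf : S.image f = S) (hT : T.Nonempty) (hTS : ∀ x ∈ T, x ∈ S ∨ ∃ n, f^[n] a = x) :
    IsClique κ T := by
  have isClique_insert_iterate (n : ℕ) : IsClique κ (insert (f^[n] a) S) := by
    simpa only [Finset.image_insert, image_iterate_of_image_eq hSf] using hf.iterate n _ hS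
  refine isClique_of_forall_exists_isClique hT fun x hx y hy ↦ ?_
  rcases hTS x hx with hxS | ⟨n, rfl⟩ <;> rcases hTS y hy with hyS | ⟨m, rfl⟩
  · exact ⟨_, hS, Finset.mem_insert_of_mem hxS, Finset.mem_insert_of_mem hyS⟩
  · exact ⟨_, isClique_insert_iterate m, Finset.mem_insert_of_mem hxS, Finset.mem_insert_self _ _⟩
  · exact ⟨_, isClique_insert_iterate n, Finset.mem_insert_self _ _, Finset.mem_insert_of_mem hyS⟩
  · exact ⟨C, hC, iterate_mem_of_image_subset hCf ha n, iterate_mem_of_image_subset hCf ha m⟩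

variable [Fintype X]

open Classical in
theorem IsSimplicial.sum_lefschetzWeight_star_eq_zero (hf : IsSimplicial κ κ f)
    (hC : IsClique κ C) (hCf : C.image f ⊆ C) (ha : a ∈ C) :
    ∑ S with IsClique κ (insert a S), lefschetzWeight f S = 0 := by
  obtain ⟨Z, hZ, hZa⟩ := exists_isMinimalStable_forall_exists_iterate_eq hCf ha
  refine hZ.sum_lefschetzWeight_eq_zero fun S hS hSf ↦ Finset.mem_filter_univ _ |>.2 ?_
  refine hf.isClique_of_forall_mem_or_iterate hC hCf ha (Finset.mem_filter_univ S |>.1 hS) hSf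
    (Finset.insert_nonempty _ _) fun x hx ↦ ?_
  rcases Finset.mem_insert.1 hx with rfl | hx
  · exact .inr ⟨0, rfl⟩
  · exact ((Finset.mem_symmDiff.1 hx).imp And.left And.left).imp_right (hZa x)

open Classical in
theorem IsSimplicial.sum_lefschetzWeight_mem_eq_neg_link (hf : IsSimplicial κ κ f)
    (hC : IsClique κ C) (hCf : C.image f ⊆ C) (ha : a ∈ C) :
    ∑ S with IsClique κ S ∧ a ∈ S, lefschetzWeight f S =
      -∑ S with IsClique κ (insert a S) ∧ a ∉ S, lefschetzWeight f S := by
  have insert_iff (S : Finset X) : IsClique κ S ∧ a ∈ S ↔ IsClique κ (insert a S) ∧ a ∈ S :=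
    and_congr_left fun haS ↦ by rw [Finset.insert_eq_of_mem haS]
  simp only [insert_iff]
  rw [eq_neg_iff_add_eq_zero, ← hf.sum_lefschetzWeight_star_eq_zero hC hCf ha,
    ← Finset.filter_filter, ← Finset.filter_filter, Finset.sum_filter_add_sum_filter_not]

open Classical in
theorem sum_lefschetzWeight_mem_eq_zero
    (h : ¬∃ S, IsClique κ S ∧ S.image f = S ∧ a ∈ S) :
    ∑ S with IsClique κ S ∧ a ∈ S, lefschetzWeight f S = 0 := by
  refine Finset.sum_eq_zero fun S hS ↦ by_contra fun hne ↦ h ?_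
  obtain ⟨hSκ, haS⟩ := Finset.mem_filter_univ _ |>.1 hS
  exact ⟨S, hSκ, image_eq_of_lefschetzWeight_ne_zero hne, haS⟩

open Classical in
theorem Contiguous.sum_lefschetzWeight_mem_eq (hfg : Contiguous κ κ f g)
    (heq : Set.EqOn f g {a}ᶜ) :
    ∑ S with IsClique κ S ∧ a ∈ S, lefschetzWeight f S =
      ∑ S with IsClique κ S ∧ a ∈ S, lefschetzWeight g S := by
  by_cases hC : ∃ C, IsClique κ C ∧ a ∈ C ∧ C.image f ⊆ C ∧ C.image g ⊆ C
  · obtain ⟨C, hC, ha, hCf, hCg⟩ := hC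
    rw [hfg.isSimplicial_left.sum_lefschetzWeight_mem_eq_neg_link hC hCf ha,
      hfg.symm.isSimplicial_left.sum_lefschetzWeight_mem_eq_neg_link hC hCg ha]
    refine congrArg Neg.neg (Finset.sum_congr rfl fun S hS ↦ lefschetzWeight_congr ?_)
    exact heq.mono (Set.subset_compl_singleton_iff.2 (Finset.mem_filter_univ _ |>.1 hS).2)
  · rw [sum_lefschetzWeight_mem_eq_zero, sum_lefschetzWeight_mem_eq_zero]
    · rintro ⟨S, hS, hSg, ha⟩
      obtain ⟨C, hCκ, hSC, hCg, hCf⟩ := hfg.symm.exists_isClique_superset hS hSg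
      exact hC ⟨C, hCκ, hSC ha, hCf, hCg⟩
    · rintro ⟨S, hS, hSf, ha⟩
      obtain ⟨C, hCκ, hSC, hCf, hCg⟩ := hfg.exists_isClique_superset hS hSf
      exact hC ⟨C, hCκ, hSC ha, hCf, hCg⟩

open Classical in
theorem simpLef_eq_neg_sum_lefschetzWeight (κ : X → X → Prop) (f : X → X) :
    simpLef κ f = -∑ S with IsClique κ S, lefschetzWeight f S := by
  rw [simpLef, Finset.sum_filter, ← Finset.sum_neg_distrib]
  refine Finset.sum_congr rfl fun S _ ↦ ?_
  by_cases hS : IsClique κ S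
  · by_cases hSf : S.image f = S
    · rw [dif_pos ⟨hS, hSf⟩, if_pos hS, lefschetzWeight_of_image_eq hSf,
        ← mul_pow_sub_one hS.1.card_ne_zero (-1 : ℤ)]
      ring
    · rw [dif_neg (hSf ·.2), if_pos hS, lefschetzWeight, dif_neg hSf, neg_zero]
  · rw [dif_neg (hS ·.1), if_neg hS, neg_zero]

theorem Contiguous.simpLef_eq_of_eqOn_compl (hfg : Contiguous κ κ f g)
    (heq : Set.EqOn f g {a}ᶜ) : simpLef κ f = simpLef κ g := by
  classical
  rw [simpLef_eq_neg_sum_lefschetzWeight, simpLef_eq_neg_sum_lefschetzWeight, neg_inj,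
    ← Finset.sum_filter_add_sum_filter_not _ (a ∈ ·) (lefschetzWeight f),
    ← Finset.sum_filter_add_sum_filter_not _ (a ∈ ·) (lefschetzWeight g), Finset.filter_filter,
    hfg.sum_lefschetzWeight_mem_eq heq]
  refine congrArg _ (Finset.sum_congr rfl fun S hS ↦ lefschetzWeight_congr ?_)
  exact heq.mono (Set.subset_compl_singleton_iff.2 (Finset.mem_filter.1 hS).2)

theorem Contiguous.simpLef_eq (hfg : Contiguous κ κ f g) : simpLef κ f = simpLef κ g := by
  have piecewise_eq_or (A : Finset X) (x : X) :
      A.piecewise g f x = f x ∨ A.piecewise g f x = g x := by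
    by_cases hx : x ∈ A <;> simp [hx]
  have simpLef_piecewise (A : Finset X) : simpLef κ f = simpLef κ (A.piecewise g f) := by
    induction A using Finset.induction_on with
    | empty => rw [Finset.piecewise_empty]
    | insert a A _ ih =>
      have step : Contiguous κ κ (A.piecewise g f) ((insert a A).piecewise g f) :=
        hfg.of_forall_eq_or (piecewise_eq_or A) (piecewise_eq_or _)
      exact ih.trans <| step.simpLef_eq_of_eqOn_compl (a := a) fun x hx ↦
        (A.piecewise_insert_of_ne _ _ hx).symm
  rw [simpLef_piecewise Finset.univ, Finset.piecewise_univ]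

theorem exists_isClique_image_eq_of_simpLef_ne_zero (hL : simpLef κ f ≠ 0) :
    ∃ S, IsClique κ S ∧ S.image f = S := by
  obtain ⟨S, -, hS⟩ := Finset.exists_ne_zero_of_sum_ne_zero hL
  exact ⟨S, of_not_not fun h ↦ hS (dif_neg h)⟩

end Lefschetz

theorem StrongHomotopic.exists_contiguous {X Y : Type*} [DecidableEq Y] {κ : X → X → Prop}
    {lam : Y → Y → Prop} {f g : X → Y} (hfg : StrongHomotopic κ lam f g) :
    ∃ (m : ℕ) (H : ℕ → X → Y), H 0 = f ∧ H m = g ∧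
      ∀ t < m, Contiguous κ lam (H t) (H (t + 1)) := by
  obtain ⟨m, H, hH0, hHm, hH⟩ := hfg
  refine ⟨m, fun t x ↦ H x t, funext hH0, funext hHm, fun t ht S hS ↦
    ⟨(hS.1.image _).mono Finset.subset_union_left, ?_⟩⟩
  have exists_eq : ∀ y ∈ S.image (H · t) ∪ S.image (H · (t + 1)),
      ∃ x ∈ S, ∃ s, (s = t ∨ s = t + 1) ∧ H x s = y := by
    intro y hy
    rcases Finset.mem_union.1 hy with hy | hy <;> obtain ⟨x, hx, rfl⟩ := Finset.mem_image.1 hy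
    · exact ⟨x, hx, t, .inl rfl, rfl⟩
    · exact ⟨x, hx, t + 1, .inr rfl, rfl⟩
  intro y hy y' hy' hne
  obtain ⟨x, hx, s, hs, rfl⟩ := exists_eq y hy
  obtain ⟨x', hx', s', hs', rfl⟩ := exists_eq y' hy'
  refine (hH x x' s s' (by lia) (by lia) ?_ (by lia) ?_).resolve_left hne
  · exact or_iff_not_imp_left.2 (hS.2 x hx x' hx')
  · exact not_and_or.1 fun ⟨hxx', hss'⟩ ↦ hne (by rw [hxx', hss'])

theorem StrongHomotopic.simpLef_eq {X : Type*} [Fintype X] [DecidableEq X] {κ : X → X → Prop}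
    {f g : X → X} (hfg : StrongHomotopic κ κ f g) : simpLef κ f = simpLef κ g := by
  obtain ⟨m, H, rfl, rfl, hH⟩ := hfg.exists_contiguous
  have simpLef_eq (t : ℕ) (ht : t ≤ m) : simpLef κ (H 0) = simpLef κ (H t) := by
    induction t with
    | zero => rfl
    | succ t ih => exact (ih (Nat.le_of_succ_le ht)).trans (hH t ht).simpLef_eq
  exact simpLef_eq m le_rfl

theorem IsClique.approxFix {X : Type*} [DecidableEq X] {κ : X → X → Prop} {f : X → X}
    {S : Finset X} (hS : IsClique κ S) (hSf : S.image f ⊆ S) {x : X} (hx : x ∈ S) :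
    ApproxFix κ f x :=
  or_iff_not_imp_left.2 fun hfx ↦
    hS.2 x hx (f x) (hSf (Finset.mem_image_of_mem f hx)) (Ne.symm hfx)

theorem strongHomotopic_fixed_or_approx_of_simpLef_ne_zero_general
    {X : Type*} [Fintype X] [DecidableEq X] {κ : X → X → Prop} {f g : X → X}
    (hL : simpLef κ f ≠ 0) (hfg : StrongHomotopic κ κ f g) :
    (∃ x, g x = x) ∨ ∃ x y, x ≠ y ∧ ApproxFix κ g x ∧ ApproxFix κ g y := by
  obtain ⟨S, hS, hSg⟩ := exists_isClique_image_eq_of_simpLef_ne_zero (hfg.simpLef_eq ▸ hL)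
  obtain ⟨x, hx⟩ := hS.1
  refine or_iff_not_imp_left.2 fun hfix ↦ ⟨x, g x, fun h ↦ hfix ⟨x, h.symm⟩, ?_, ?_⟩
  · exact hS.approxFix hSg.le hx
  · exact hS.approxFix hSg.le (hSg.le (Finset.mem_image_of_mem g hx))

/-- Let `(X,κ)` be a finite digital image and `f : X → X` a continuous self-map with
`L(f) ≠ 0`. Then every continuous self-map `g : X → X` strongly homotopic to `f` has a
fixed point or has at least two distinct approximate fixed points. -/
theorem strongHomotopic_fixed_or_approx_of_simpLef_ne_zero
    {X : Type*} [Fintype X] [DecidableEq X]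
    (κ : X → X → Prop) (hsym : Symmetric κ) (hirr : Irreflexive κ)
    (f : X → X) (hf : DigCont κ κ f) (hL : simpLef κ f ≠ 0) :
    ∀ g : X → X, DigCont κ κ g → StrongHomotopic κ κ f g →
      (∃ x, g x = x) ∨ ∃ x y, x ≠ y ∧ ApproxFix κ g x ∧ ApproxFix κ g y :=
  fun _ _ hfg ↦ strongHomotopic_fixed_or_approx_of_simpLef_ne_zero_general hL hfg
end

section
/- Let (X,κ) be a finite strongly contractible digital image. Then every continuous self-map f : X → X has a fixed point or has at least two distinct approximate fixed points. -/
/-- `(X,κ)` is strongly contractible: the identity map is strongly homotopic to a constant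
map. -/
def StronglyContractible {X : Type*} (κ : X → X → Prop) : Prop :=
  ∃ x₀ : X, StrongHomotopic κ κ id (fun _ => x₀)

/-!
Composing a contraction of `X` with `f` and reversing it gives a strong homotopy from a constant
map to `f`. The constant map has a fixed point, and approximate fixed points persist along strong
homotopies: if `x` is equal or adjacent to `g x` and `h` is the next stage after `g`, then `g x` is
equal or adjacent to `h (g x)`. Finally, if `x` is an approximate fixed point of `f`, so is `f x`.
-/

theorem DigCont.eq_or_adj {X Y : Type*} {κ : X → X → Prop} {lam : Y → Y → Prop} {f : X → Y}
    (hf : DigCont κ lam f) {x y : X} (hxy : x = y ∨ κ x y) : f x = f y ∨ lam (f x) (f y) := by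
  rcases hxy with rfl | hxy
  · exact Or.inl rfl
  · exact hf x y hxy

namespace StrongHomotopic

theorem symm {X Y : Type*} {κ : X → X → Prop} {lam : Y → Y → Prop} {f g : X → Y}
    (h : StrongHomotopic κ lam f g) : StrongHomotopic κ lam g f := by
  obtain ⟨m, H, hH_zero, hH_last, hH⟩ := h
  refine ⟨m, fun x t => H x (m - t), hH_last, fun x => ?_, fun x x' t t' ht ht' hx htt' hne => ?_⟩
  · simpa only [Nat.sub_self] using hH_zero x
  · exact hH x x' (m - t) (m - t') (m.sub_le t) (m.sub_le t') hx (by omega)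
      (hne.imp_right fun _ => by omega)

theorem comp_right {X Y Z : Type*} {κ : X → X → Prop} {lam : Y → Y → Prop} {mu : Z → Z → Prop}
    {f g : Y → Z} {k : X → Y} (h : StrongHomotopic lam mu f g) (hk : DigCont κ lam k) :
    StrongHomotopic κ mu (f ∘ k) (g ∘ k) := by
  obtain ⟨m, H, hH_zero, hH_last, hH⟩ := h
  refine ⟨m, fun x => H (k x), fun x => hH_zero (k x), fun x => hH_last (k x),
    fun x x' t t' ht ht' hx htt' _ => ?_⟩
  by_cases heq : k x = k x' ∧ t = t'
  · exact Or.inl (congrArg₂ H heq.1 heq.2)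
  · exact hH _ _ t t' ht ht' (hk.eq_or_adj hx) htt' (not_and_or.mp heq)

end StrongHomotopic

namespace ApproxFix

theorem apply_of_eq_or_adj {X : Type*} {κ : X → X → Prop} {g h : X → X} {x : X}
    (hgh : ∀ y z, y = z ∨ κ y z → g y = h z ∨ κ (g y) (h z)) (hx : ApproxFix κ g x) :
    ApproxFix κ h (g x) :=
  (hgh x (g x) (hx.imp_left Eq.symm)).imp_left Eq.symm

theorem apply {X : Type*} {κ : X → X → Prop} {f : X → X} {x : X} (hx : ApproxFix κ f x)
    (hf : DigCont κ κ f) : ApproxFix κ f (f x) :=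
  hx.apply_of_eq_or_adj fun _ _ => hf.eq_or_adj

end ApproxFix

theorem StrongHomotopic.exists_approxFix {X : Type*} {κ : X → X → Prop} {f g : X → X}
    (h : StrongHomotopic κ κ f g) (hf : ∃ x, ApproxFix κ f x) : ∃ x, ApproxFix κ g x := by
  obtain ⟨m, H, hH_zero, hH_last, hH⟩ := h
  have stage : ∀ t ≤ m, ∃ x, ApproxFix κ (H · t) x := by
    intro t
    induction t with
    | zero => exact fun _ => by simpa only [hH_zero] using hf
    | succ t ih =>
      intro ht
      obtain ⟨x, hx⟩ := ih (Nat.le_of_succ_le ht)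
      exact ⟨H x t, hx.apply_of_eq_or_adj fun y z hyz =>
        hH y z t (t + 1) (Nat.le_of_succ_le ht) ht hyz (by omega) (by omega)⟩
  simpa only [hH_last] using stage m le_rfl

theorem StronglyContractible.exists_approxFix {X : Type*} {κ : X → X → Prop}
    (hX : StronglyContractible κ) {f : X → X} (hf : DigCont κ κ f) : ∃ x, ApproxFix κ f x := by
  obtain ⟨x₀, h⟩ := hX
  exact (h.comp_right hf).symm.exists_approxFix ⟨x₀, Or.inl rfl⟩

theorem fixed_or_approx_of_stronglyContractible_general {X : Type*} {κ : X → X → Prop}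
    (hX : StronglyContractible κ) {f : X → X} (hf : DigCont κ κ f) :
    (∃ x, f x = x) ∨ ∃ x y, x ≠ y ∧ ApproxFix κ f x ∧ ApproxFix κ f y := by
  obtain ⟨x, hx⟩ := hX.exists_approxFix hf
  by_cases hfx : f x = x
  · exact Or.inl ⟨x, hfx⟩
  · exact Or.inr ⟨x, f x, Ne.symm hfx, hx, hx.apply hf⟩

/-- Let `(X,κ)` be a finite strongly contractible digital image. Then every continuous
self-map `f : X → X` has a fixed point or at least two distinct approximate fixed
points. -/
theorem fixed_or_approx_of_stronglyContractible {X : Type*} [Fintype X] [DecidableEq X]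
    (κ : X → X → Prop) (hsym : Symmetric κ) (hirr : Irreflexive κ)
    (hX : StronglyContractible κ) :
    ∀ f : X → X, DigCont κ κ f →
      (∃ x, f x = x) ∨ ∃ x y, x ≠ y ∧ ApproxFix κ f x ∧ ApproxFix κ f y :=
  fun _ hf => fixed_or_approx_of_stronglyContractible_general hX hf
end

section
/- Let X ⊆ ℤ^n be a finite digital image with c1-adjacency, where n ≤ 3, and let f, g : X → X be c1-continuous self-maps that are homotopic (f ≃ g). Then L̄(f) = L̄(g). -/
/-- `c1`-adjacency on `ℤ^n`: `x, y` are `c1`-adjacent iff `∑ i, |x i − y i| = 1`. -/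
def c1Adj {n : ℕ} (x y : Fin n → ℤ) : Prop := (∑ i, |x i - y i|) = 1

/-- `f` is `c1`-continuous on the digital image `X ⊆ ℤ^n`: `c1`-adjacent points of `X` have
equal or `c1`-adjacent images. -/
def c1Cont {n m : ℕ} (X : Finset (Fin n → ℤ)) (f : (Fin n → ℤ) → (Fin m → ℤ)) : Prop :=
  ∀ x ∈ X, ∀ y ∈ X, c1Adj x y → f x = f y ∨ c1Adj (f x) (f y)

/-- `f` maps the digital image `X` into the digital image `Y`. -/
def MapsInto {n m : ℕ} (X : Finset (Fin n → ℤ)) (Y : Finset (Fin m → ℤ))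
    (f : (Fin n → ℤ) → (Fin m → ℤ)) : Prop :=
  ∀ x ∈ X, f x ∈ Y

/-- The elementary cube `σ = t_1 × ⋯ × t_n ⊆ ℤ^n` with minimal corner `a`, where
`t_i = {a i, a i + 1}` for `i ∈ D` (the nondegenerate directions, so `dim σ = D.card`)
and `t_i = {a i}` otherwise. -/
def eCube {n : ℕ} (a : Fin n → ℤ) (D : Finset (Fin n)) : Finset (Fin n → ℤ) :=
  D.powerset.image (fun s i => a i + if i ∈ s then 1 else 0)

/-- A homotopy between continuous maps `f, g : X → Y` is `H : X × {0,…,k} → Y` with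
`H(x,0) = f(x)`, `H(x,k) = g(x)`, sending consecutive stages of each point to equal or
adjacent points, and continuous at each stage; `f ≃ g` iff such an `H` exists. -/
def c1Homotopic {n m : ℕ} (X : Finset (Fin n → ℤ)) (Y : Finset (Fin m → ℤ))
    (f g : (Fin n → ℤ) → (Fin m → ℤ)) : Prop :=
  ∃ (k : ℕ) (H : (Fin n → ℤ) → ℕ → (Fin m → ℤ)),
    (∀ x ∈ X, ∀ t ≤ k, H x t ∈ Y) ∧
    (∀ x ∈ X, H x 0 = f x) ∧ (∀ x ∈ X, H x k = g x) ∧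
    (∀ x ∈ X, ∀ t, t + 1 ≤ k → (H x t = H x (t + 1) ∨ c1Adj (H x t) (H x (t + 1)))) ∧
    (∀ t ≤ k, ∀ x ∈ X, ∀ x' ∈ X, c1Adj x x' → (H x t = H x' t ∨ c1Adj (H x t) (H x' t)))

/-- `x` is a `k`-approximate fixed point of `f` on `X`: there is a `c1`-path in `X` from
`x` to `f x` of length at most `k`. -/
def nApproxFix {n : ℕ} (X : Finset (Fin n → ℤ)) (f : (Fin n → ℤ) → (Fin n → ℤ))
    (k : ℕ) (x : Fin n → ℤ) : Prop :=
  ∃ (m : ℕ) (p : ℕ → (Fin n → ℤ)), m ≤ k ∧ p 0 = x ∧ p m = f x ∧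
    (∀ t ≤ m, p t ∈ X) ∧
    (∀ t, t + 1 ≤ m → (p t = p (t + 1) ∨ c1Adj (p t) (p (t + 1))))

open Classical in
/-- `ε(f, σ)` for `σ = eCube a D` with `f(σ) = σ`: on the nondegenerate directions `D` of
`σ`, `f` is given by an affine map `x ↦ b + Mx` with `M` a signed permutation matrix
(a permutation `π` of `D` together with signs `s : D → {±1}`), and
`ε(f,σ) = det M = sgn(π) ⬝ ∏ s`. (Junk value `0` if `f` is not of this form on `σ`.) -/
noncomputable def cubeSign {n : ℕ} (f : (Fin n → ℤ) → (Fin n → ℤ))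
    (a : Fin n → ℤ) (D : Finset (Fin n)) : ℤ :=
  if h : ∃ p : Equiv.Perm {i // i ∈ D} × ({i // i ∈ D} → ℤ),
      (∀ i, p.2 i = 1 ∨ p.2 i = -1) ∧
      ∀ x ∈ eCube a D, ∀ i : {i // i ∈ D},
        f x (i : Fin n) = f a (i : Fin n) + p.2 i * (x ((p.1 i : Fin n)) - a ((p.1 i : Fin n)))
  then ((Equiv.Perm.sign h.choose.1 : ℤˣ) : ℤ) * ∏ i, h.choose.2 i
  else 0

open Classical in
/-- The cubical Lefschetz number `L̄(f) = ∑_σ (−1)^{dim σ} ε(f,σ)`, summing over all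
elementary cubes `σ ⊆ X` with `f(σ) = σ`. -/
noncomputable def cubLef {n : ℕ} (X : Finset (Fin n → ℤ))
    (f : (Fin n → ℤ) → (Fin n → ℤ)) : ℤ :=
  ∑ a ∈ X, ∑ D : Finset (Fin n),
    if eCube a D ⊆ X ∧ (eCube a D).image f = eCube a D then
      (-1 : ℤ) ^ D.card * cubeSign f a D
    else 0

open Classical in
/-- The cubical Euler characteristic `χ̄(X) = ∑_q (−1)^q k_q`, with `k_q` the number of
elementary cubes of dimension `q` contained in `X`. -/
noncomputable def cubEuler {n : ℕ} (X : Finset (Fin n → ℤ)) : ℤ :=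
  ∑ a ∈ X, ∑ D : Finset (Fin n),
    if eCube a D ⊆ X then (-1 : ℤ) ^ D.card else 0

/-! A `c1`-continuous `K` pushes cubical chains forward. The coefficient of a cube `τ` in the
push-forward of `σ` is a cup product of the coboundaries of the indicators of `{x | K x j > τ_j}`,
one for each nondegenerate direction `j` of `τ`, restricted to the cubes on which the remaining
coordinates of `K` agree with those of `τ`. Cup products of coboundaries are closed, and they
anticommute because an edge moves at most one coordinate of its image; this makes the push-forward
a chain map. Since `K` does not increase `ℓ¹` distances, a nonzero coefficient forces `K` to be a
signed permutation from `σ` onto `τ`, and the coefficient is then its determinant. Hence `L̄(f)` is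
the alternating trace of the chain map of `f`.

When `f` and `g` move each point of `X` by at most one step, they fit together to a `c1`-continuous
map on prisms, whose push-forward is a chain homotopy `P` with `g - f = ∂P + P∂`. Cyclicity of the
trace makes the alternating trace of the right-hand side vanish. -/

section CubicalCochains

open Finset

variable {m : ℕ}

/-- The elementary cube with minimal corner `σ.1` and nondegenerate directions `σ.2`, as a
combinatorial cell; its vertex set is `eCube σ.1 σ.2`. -/
abbrev ElemCube (m : ℕ) := (Fin m → ℤ) × Finset (Fin m)

/-- The face of `σ` on which the `k`-th coordinate is minimal (for a nondegenerate direction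
`k`). -/
@[simps]
def lowerFace (k : Fin m) (σ : ElemCube m) : ElemCube m := (σ.1, σ.2.erase k)

/-- The face of `σ` on which the `k`-th coordinate is maximal (for a nondegenerate direction
`k`). -/
@[simps]
def upperFace (k : Fin m) (σ : ElemCube m) : ElemCube m :=
  (σ.1 + Pi.single k 1, σ.2.erase k)

/-- The Koszul sign `(-1)^p`, where `p` is the position of `k` in `D` (counted from `0`): the
orientation of the pair of faces in direction `k` of a cube with directions `D`. -/
def dirSign {ι : Type*} [LinearOrder ι] (k : ι) (D : Finset ι) : ℤ := (-1) ^ #{i ∈ D | i < k}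

/-- The cubical coboundary of an integral cochain `β`. -/
def coboundary (β : ElemCube m → ℤ) (σ : ElemCube m) : ℤ :=
  ∑ k ∈ σ.2, dirSign k σ.2 * (β (upperFace k σ) - β (lowerFace k σ))

/-- The cup product `dv ⌣ β` of the coboundary of a function `v` on points with a cochain `β`.
The factor `dv` is evaluated on the edges at the minimal corner, `β` on the opposite faces. -/
def cupDiff (v : (Fin m → ℤ) → ℤ) (β : ElemCube m → ℤ) (σ : ElemCube m) : ℤ :=
  ∑ k ∈ σ.2, dirSign k σ.2 * ((v (upperFace k σ).1 - v σ.1) * β (upperFace k σ))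

/-- The iterated cup product `dv₁ ⌣ ⋯ ⌣ dv_q`; for `q = 0` it is the unit cochain. -/
def cupDiffs : List ((Fin m → ℤ) → ℤ) → ElemCube m → ℤ
  | [] => fun σ => if σ.2 = ∅ then 1 else 0
  | v :: L => cupDiff v (cupDiffs L)

theorem dirSign_mul_self {ι : Type*} [LinearOrder ι] (k : ι) (D : Finset ι) :
    dirSign k D * dirSign k D = 1 := by
  rw [dirSign, ← mul_pow, neg_one_mul, neg_neg, one_pow]

theorem dirSign_mul_dirSign_erase {ι : Type*} [LinearOrder ι] {D : Finset ι} {k l : ι}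
    (hk : k ∈ D) (hl : l ∈ D) (hkl : k ≠ l) :
    dirSign k D * dirSign l (D.erase k) = -(dirSign l D * dirSign k (D.erase l)) := by
  wlog hlt : k < l generalizing k l
  · rw [this hl hk hkl.symm (lt_of_le_of_ne (not_lt.1 hlt) hkl.symm), neg_neg]
  have h_low : dirSign k (D.erase l) = dirSign k D := by
    rw [dirSign, filter_erase, erase_eq_of_notMem (by simp [hlt.le]), dirSign]
  have h_high : dirSign l D = -dirSign l (D.erase k) := by
    have hmem : k ∈ ({i ∈ D | i < l} : Finset ι) := by simp [hk, hlt]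
    rw [dirSign, dirSign, filter_erase, ← card_erase_add_one hmem, pow_succ, mul_neg_one]
  rw [h_low, h_high]
  ring

/-- Removing two directions in either order gives opposite signs, so symmetric summands cancel. -/
theorem sum_dirSign_mul_dirSign_erase_eq_zero {ι : Type*} [LinearOrder ι] (D : Finset ι)
    (Φ : ι → ι → ℤ) (hΦ : ∀ k l, Φ k l = Φ l k) :
    ∑ k ∈ D, ∑ l ∈ D.erase k, dirSign k D * dirSign l (D.erase k) * Φ k l = 0 := by
  have h_comm : ∑ k ∈ D, ∑ l ∈ D.erase k, dirSign k D * dirSign l (D.erase k) * Φ k l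
      = ∑ l ∈ D, ∑ k ∈ D.erase l, dirSign k D * dirSign l (D.erase k) * Φ k l :=
    sum_comm' fun k l => by simp only [mem_erase]; tauto
  have h_neg : ∑ l ∈ D, ∑ k ∈ D.erase l, dirSign k D * dirSign l (D.erase k) * Φ k l
      = -∑ l ∈ D, ∑ k ∈ D.erase l, dirSign l D * dirSign k (D.erase l) * Φ l k := by
    simp only [← sum_neg_distrib]
    refine sum_congr rfl fun l hl => sum_congr rfl fun k hk => ?_
    obtain ⟨hkl, hk⟩ := mem_erase.1 hk
    rw [dirSign_mul_dirSign_erase hk hl hkl, hΦ k l, neg_mul]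
  linarith

theorem upperFace_upperFace_comm (k l : Fin m) (σ : ElemCube m) :
    upperFace l (upperFace k σ) = upperFace k (upperFace l σ) :=
  Prod.ext (add_right_comm ..) erase_right_comm

theorem lowerFace_lowerFace_comm (k l : Fin m) (σ : ElemCube m) :
    lowerFace l (lowerFace k σ) = lowerFace k (lowerFace l σ) :=
  Prod.ext rfl erase_right_comm

theorem lowerFace_upperFace_comm (k l : Fin m) (σ : ElemCube m) :
    lowerFace l (upperFace k σ) = upperFace k (lowerFace l σ) :=
  Prod.ext rfl erase_right_comm

theorem coboundary_coboundary (β : ElemCube m → ℤ) : coboundary (coboundary β) = 0 := by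
  funext σ
  rw [Pi.zero_apply, ← sum_dirSign_mul_dirSign_erase_eq_zero σ.2 fun k l =>
    β (upperFace l (upperFace k σ)) - β (lowerFace l (upperFace k σ))
      - (β (upperFace l (lowerFace k σ)) - β (lowerFace l (lowerFace k σ)))]
  · refine sum_congr rfl fun k _ => ?_
    simp only [coboundary]
    rw [upperFace_snd, lowerFace_snd, ← sum_sub_distrib, mul_sum]
    exact sum_congr rfl fun l _ => by ring
  · intro k l
    rw [upperFace_upperFace_comm k l, lowerFace_lowerFace_comm k l, lowerFace_upperFace_comm k l,
      lowerFace_upperFace_comm l k]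
    ring

theorem coboundary_mul (v : (Fin m → ℤ) → ℤ) (β : ElemCube m → ℤ) (σ : ElemCube m) :
    coboundary (fun σ => v σ.1 * β σ) σ = cupDiff v β σ + v σ.1 * coboundary β σ := by
  simp only [coboundary, cupDiff, mul_sum, ← sum_add_distrib]
  refine sum_congr rfl fun k _ => ?_
  rw [show (lowerFace k σ).1 = σ.1 from rfl]
  ring

/-- `dv₁ ⌣ dv₂ ⌣ ⋯` is the coboundary of `v₁ · (dv₂ ⌣ ⋯)`, because the second factor is closed. -/
theorem coboundary_cupDiffs (L : List ((Fin m → ℤ) → ℤ)) : coboundary (cupDiffs L) = 0 := by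
  induction L with
  | nil =>
    exact funext fun σ => sum_eq_zero fun k _ => mul_eq_zero_of_right _ (sub_self _)
  | cons v L ih =>
    have h_exact : coboundary (fun σ => v σ.1 * cupDiffs L σ) = cupDiffs (v :: L) := by
      funext σ
      rw [coboundary_mul, ih, Pi.zero_apply, mul_zero, add_zero, cupDiffs]
    rw [← h_exact, coboundary_coboundary]

theorem cupDiff_smul (v : (Fin m → ℤ) → ℤ) {β γ : ElemCube m → ℤ} (c : ℤ) {σ : ElemCube m}
    (h : ∀ k ∈ σ.2, β (upperFace k σ) = c * γ (upperFace k σ)) :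
    cupDiff v β σ = c * cupDiff v γ σ := by
  rw [cupDiff, cupDiff, mul_sum]
  refine sum_congr rfl fun k hk => ?_
  rw [h k hk]
  ring

theorem exists_of_cupDiff_ne_zero {v : (Fin m → ℤ) → ℤ} {β : ElemCube m → ℤ} {σ : ElemCube m}
    (h : cupDiff v β σ ≠ 0) :
    ∃ k ∈ σ.2, v (upperFace k σ).1 ≠ v σ.1 ∧ β (upperFace k σ) ≠ 0 := by
  obtain ⟨k, hk, hne⟩ := exists_ne_zero_of_sum_ne_zero h
  have hne := right_ne_zero_of_mul hne
  exact ⟨k, hk, sub_ne_zero.1 (left_ne_zero_of_mul hne), right_ne_zero_of_mul hne⟩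

theorem card_eq_length_of_cupDiffs_ne_zero {L : List ((Fin m → ℤ) → ℤ)} {σ : ElemCube m}
    (h : cupDiffs L σ ≠ 0) : #σ.2 = L.length := by
  induction L generalizing σ with
  | nil =>
    have hσ : σ.2 = ∅ := by simpa [cupDiffs] using h
    simp [hσ]
  | cons v L ih =>
    obtain ⟨k, hk, -, hL⟩ := exists_of_cupDiff_ne_zero h
    rw [List.length_cons, ← ih hL, ← card_erase_add_one hk, upperFace]

end CubicalCochains

section CubeGeometry

open Finset

variable {m : ℕ}

theorem mem_eCube {a : Fin m → ℤ} {D : Finset (Fin m)} {x : Fin m → ℤ} :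
    x ∈ eCube a D ↔ ∀ i, x i = a i ∨ (i ∈ D ∧ x i = a i + 1) := by
  simp only [eCube, mem_image, mem_powerset]
  constructor
  · rintro ⟨s, hs, rfl⟩ i
    by_cases hi : i ∈ s
    · exact Or.inr ⟨hs hi, by simp [hi]⟩
    · exact Or.inl (by simp [hi])
  · intro h
    refine ⟨{i ∈ D | x i = a i + 1}, filter_subset _ _, funext fun i => ?_⟩
    rcases h i with hi | ⟨hiD, hi⟩
    · simp [hi]
    · simp [hiD, hi]

theorem corner_mem_eCube (σ : ElemCube m) : σ.1 ∈ eCube σ.1 σ.2 :=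
  mem_eCube.2 fun _ => Or.inl rfl

theorem eCube_lowerFace_subset (k : Fin m) (σ : ElemCube m) :
    eCube (lowerFace k σ).1 (lowerFace k σ).2 ⊆ eCube σ.1 σ.2 := fun _ hx =>
  mem_eCube.2 fun i => (mem_eCube.1 hx i).imp_right fun h => ⟨mem_of_mem_erase h.1, h.2⟩

theorem add_single_mem_eCube {k : Fin m} {σ : ElemCube m} (hk : k ∈ σ.2) {x : Fin m → ℤ}
    (hx : x ∈ eCube (lowerFace k σ).1 (lowerFace k σ).2) :
    x + Pi.single k 1 ∈ eCube σ.1 σ.2 := by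
  refine mem_eCube.2 fun i => ?_
  have hi := mem_eCube.1 hx i
  by_cases hik : i = k
  · subst hik
    simp_all [lowerFace]
  · simpa [hik, lowerFace] using hi

theorem eCube_upperFace_subset {k : Fin m} {σ : ElemCube m} (hk : k ∈ σ.2) :
    eCube (upperFace k σ).1 (upperFace k σ).2 ⊆ eCube σ.1 σ.2 := by
  intro x hx
  refine mem_eCube.2 fun i => ?_
  have hi := mem_eCube.1 hx i
  by_cases hik : i = k
  · subst hik
    simp_all [upperFace]
  · simpa [hik, upperFace] using hi

theorem upperFace_corner_mem_eCube {k : Fin m} {σ : ElemCube m} (hk : k ∈ σ.2) :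
    (upperFace k σ).1 ∈ eCube σ.1 σ.2 :=
  eCube_upperFace_subset hk (corner_mem_eCube _)

theorem c1Adj_add_single (x : Fin m → ℤ) (k : Fin m) : c1Adj x (x + Pi.single k 1) := by
  simp [c1Adj, Pi.single_apply, apply_ite abs]

theorem c1Adj_comm {x y : Fin m → ℤ} : c1Adj x y ↔ c1Adj y x := by
  simp only [c1Adj, abs_sub_comm]

/-- The `ℓ¹` distance on `ℤ^m`; `c1`-adjacency is being at distance `1`. -/
def l1Dist (x y : Fin m → ℤ) : ℤ := ∑ i, |x i - y i|

theorem l1Dist_triangle (x y z : Fin m → ℤ) : l1Dist x z ≤ l1Dist x y + l1Dist y z := by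
  rw [l1Dist, l1Dist, l1Dist, ← sum_add_distrib]
  exact sum_le_sum fun i _ => abs_sub_le _ _ _

theorem l1Dist_le_one {x y : Fin m → ℤ} (h : x = y ∨ c1Adj x y) : l1Dist x y ≤ 1 := by
  rcases h with rfl | h
  · simp [l1Dist]
  · exact h.le

theorem l1Dist_eq_add_l1Dist_update (x y : Fin m → ℤ) (i : Fin m) :
    l1Dist x y = |x i - y i| + l1Dist (Function.update x i (y i)) y := by
  rw [l1Dist, l1Dist, ← add_sum_erase _ _ (mem_univ i), ← add_sum_erase univ
    (fun j => |Function.update x i (y i) j - y j|) (mem_univ i), Function.update_self, sub_self,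
    abs_zero, zero_add]
  congr 1
  refine sum_congr rfl fun j hj => ?_
  rw [Function.update_of_ne (ne_of_mem_erase hj)]

theorem l1Dist_add_single (x y : Fin m → ℤ) (i : Fin m) (s : ℤ) :
    l1Dist (x + Pi.single i s) y = l1Dist x y - |x i - y i| + |x i + s - y i| := by
  have h_update : Function.update (x + Pi.single i s) i (y i) = Function.update x i (y i) := by
    funext j
    by_cases hji : j = i <;> simp [hji]
  rw [l1Dist_eq_add_l1Dist_update _ y i, l1Dist_eq_add_l1Dist_update x y i, h_update,
    Pi.add_apply, Pi.single_eq_same]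
  ring

theorem l1Dist_nonneg (x y : Fin m → ℤ) : 0 ≤ l1Dist x y :=
  sum_nonneg fun _ _ => abs_nonneg _

theorem exists_eq_add_single_of_c1Adj {x y : Fin m → ℤ} (h : c1Adj x y) :
    ∃ l, ∃ s : ℤ, (s = 1 ∨ s = -1) ∧ y = x + Pi.single l s := by
  obtain ⟨l, hl⟩ : ∃ l, x l ≠ y l := by
    by_contra! hxy
    simp [c1Adj, hxy] at h
  have h_split := l1Dist_eq_add_l1Dist_update x y l
  have h_one : l1Dist x y = 1 := h
  have h_pos : 1 ≤ |x l - y l| := Int.one_le_abs (sub_ne_zero.2 hl)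
  have h_rest : l1Dist (Function.update x l (y l)) y = 0 := by
    linarith [l1Dist_nonneg (Function.update x l (y l)) y]
  refine ⟨l, y l - x l, ?_, funext fun i => ?_⟩
  · have h_abs : |y l - x l| = 1 := by rw [abs_sub_comm]; linarith
    exact eq_or_eq_neg_of_abs_eq h_abs
  · rw [l1Dist, sum_eq_zero_iff_of_nonneg fun _ _ => abs_nonneg _] at h_rest
    have hi := sub_eq_zero.1 (abs_eq_zero.1 (h_rest i (mem_univ i)))
    by_cases hil : i = l
    · simp [hil]
    · rw [Function.update_of_ne hil] at hi
      simp [hil, hi]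

theorem c1Cont.mono {n : ℕ} {X Y : Finset (Fin m → ℤ)} {K : (Fin m → ℤ) → (Fin n → ℤ)}
    (hK : c1Cont X K) (hYX : Y ⊆ X) : c1Cont Y K := fun x hx y hy =>
  hK x (hYX hx) y (hYX hy)

/-- Vertices of a cube are joined by `ℓ¹`-geodesics inside it. -/
theorem l1Dist_map_le_of_c1Cont {n : ℕ} {K : (Fin m → ℤ) → (Fin n → ℤ)} {σ : ElemCube m}
    (hK : c1Cont (eCube σ.1 σ.2) K) {x y : Fin m → ℤ} (hx : x ∈ eCube σ.1 σ.2)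
    (hy : y ∈ eCube σ.1 σ.2) : l1Dist (K x) (K y) ≤ l1Dist x y := by
  by_cases hxy : x = y
  · simp [hxy, l1Dist]
  obtain ⟨i, hi⟩ := Function.ne_iff.1 hxy
  obtain ⟨z, hz_def⟩ : ∃ z, z = Function.update x i (y i) := ⟨_, rfl⟩
  have hz : z ∈ eCube σ.1 σ.2 := mem_eCube.2 fun j => by
    by_cases hji : j = i
    · simpa [hz_def, hji] using mem_eCube.1 hy i
    · simpa [hz_def, hji] using mem_eCube.1 hx j
  have h_xy : l1Dist x y = |x i - y i| + l1Dist z y :=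
    hz_def ▸ l1Dist_eq_add_l1Dist_update x y i
  have h_xz : l1Dist x z = |x i - y i| := by
    rw [l1Dist_eq_add_l1Dist_update x z i, hz_def, Function.update_self]
    simp [l1Dist]
  have h_step : |x i - y i| = 1 := by
    have hxi := mem_eCube.1 hx i
    have hyi := mem_eCube.1 hy i
    rcases abs_cases (x i - y i) with h | h <;> omega
  have h_near : l1Dist (K x) (K z) ≤ 1 :=
    l1Dist_le_one (hK x hx z hz (h_xz.trans h_step))
  have h_far : l1Dist (K z) (K y) ≤ l1Dist z y := l1Dist_map_le_of_c1Cont hK hz hy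
  linarith [l1Dist_triangle (K x) (K z) (K y)]
termination_by (l1Dist x y).toNat
decreasing_by
  have := l1Dist_nonneg z y
  omega

end CubeGeometry

section OrthogonalFamilies

open Finset

variable {m : ℕ}

/-- `dv` and `dw` have disjoint supports among the edges with both endpoints in `A`. -/
def EdgewiseOrthogonal (A : Finset (Fin m → ℤ)) (v w : (Fin m → ℤ) → ℤ) : Prop :=
  ∀ x ∈ A, ∀ y ∈ A, c1Adj x y → (v y - v x) * (w y - w x) = 0

theorem EdgewiseOrthogonal.mono {A B : Finset (Fin m → ℤ)} {v w : (Fin m → ℤ) → ℤ}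
    (h : EdgewiseOrthogonal A v w) (hBA : B ⊆ A) : EdgewiseOrthogonal B v w :=
  fun x hx y hy => h x (hBA hx) y (hBA hy)

/-- Edgewise orthogonality makes `d(vw) = v dw + w dv` on the nose, and the part of the double sum
which is symmetric in the two directions cancels. -/
theorem cupDiff_cupDiff_anticomm {σ : ElemCube m} {v w : (Fin m → ℤ) → ℤ}
    (h : EdgewiseOrthogonal (eCube σ.1 σ.2) v w) (β : ElemCube m → ℤ) :
    cupDiff v (cupDiff w β) σ = -cupDiff w (cupDiff v β) σ := by
  rw [eq_neg_iff_add_eq_zero, ← sum_dirSign_mul_dirSign_erase_eq_zero σ.2 fun k l =>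
    (v (upperFace l (upperFace k σ)).1 - v σ.1) * (w (upperFace l (upperFace k σ)).1 - w σ.1)
      * β (upperFace l (upperFace k σ))]
  · simp only [cupDiff, mul_sum]
    rw [← sum_add_distrib]
    refine sum_congr rfl fun k hk => ?_
    rw [← sum_add_distrib]
    refine sum_congr rfl fun l hl => ?_
    have h_first := h _ (corner_mem_eCube σ) _ (upperFace_corner_mem_eCube hk)
      (c1Adj_add_single _ k)
    have h_second := h.mono (eCube_upperFace_subset hk) _ (corner_mem_eCube _) _
      (upperFace_corner_mem_eCube hl) (c1Adj_add_single _ l)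
    rw [upperFace_snd]
    linear_combination (-dirSign k σ.2 * dirSign l (σ.2.erase k)
      * β (upperFace l (upperFace k σ))) * (h_first + h_second)
  · intro k l
    rw [upperFace_upperFace_comm]

variable {ι : Type*} [LinearOrder ι]

/-- The cup product of the `dv_i`, `i ∈ E`, in increasing order of `i`. -/
def sortedCup (v : ι → (Fin m → ℤ) → ℤ) (E : Finset ι) : ElemCube m → ℤ :=
  cupDiffs ((E.sort (· ≤ ·)).map v)

theorem cupDiffs_orderedInsert {v : ι → (Fin m → ℤ) → ℤ} {i : ι} {l : List ι}
    (hl : l.Pairwise (· ≤ ·)) (hi : i ∉ l) {σ : ElemCube m}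
    (hv : Pairwise fun i j => EdgewiseOrthogonal (eCube σ.1 σ.2) (v i) (v j)) :
    cupDiffs ((l.orderedInsert (· ≤ ·) i).map v) σ =
      (-1) ^ (l.filter (· < i)).length * cupDiff (v i) (cupDiffs (l.map v)) σ := by
  induction l generalizing σ with
  | nil => simp [cupDiffs]
  | cons j l ih =>
    rw [List.pairwise_cons] at hl
    obtain ⟨hij, hi⟩ := not_or.1 (mt List.mem_cons.2 hi)
    by_cases hle : i ≤ j
    · have h_none : (j :: l).filter (· < i) = [] := List.filter_eq_nil_iff.2 fun k hk => by
        rcases List.mem_cons.1 hk with rfl | hk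
        · simpa using hle
        · simpa using hle.trans (hl.1 k hk)
      simp [h_none, List.orderedInsert, hle, cupDiffs]
    · have h_move : cupDiff (v j) (cupDiffs ((l.orderedInsert (· ≤ ·) i).map v)) σ =
          (-1) ^ (l.filter (· < i)).length * cupDiff (v j) (cupDiff (v i) (cupDiffs (l.map v))) σ :=
        cupDiff_smul _ _ fun k hk => ih hl.2 hi fun _ _ hne =>
          (hv hne).mono (eCube_upperFace_subset hk)
      rw [List.filter_cons_of_pos (by simpa using hle), List.orderedInsert_of_not_le _ _ hle,
        List.map_cons, List.map_cons, cupDiffs, cupDiffs, h_move,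
        cupDiff_cupDiff_anticomm (hv (Ne.symm hij)), List.length_cons, pow_succ]
      ring

theorem sort_insert_eq_orderedInsert {i : ι} {E : Finset ι} (hi : i ∉ E) :
    (insert i E).sort (· ≤ ·) = (E.sort (· ≤ ·)).orderedInsert (· ≤ ·) i := by
  refine List.Perm.eq_of_pairwise (fun _ _ _ _ => le_antisymm) (pairwise_sort _ _)
    ((pairwise_sort E (· ≤ ·)).orderedInsert _ _) (.trans ?_ (List.perm_orderedInsert _ _ _).symm)
  rw [← Multiset.coe_eq_coe, ← Multiset.cons_coe, sort_eq, sort_eq, insert_val_of_notMem hi]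

theorem sortedCup_insert {v : ι → (Fin m → ℤ) → ℤ} {i : ι} {E : Finset ι} (hi : i ∉ E)
    {σ : ElemCube m} (hv : Pairwise fun i j => EdgewiseOrthogonal (eCube σ.1 σ.2) (v i) (v j)) :
    sortedCup v (insert i E) σ = dirSign i (insert i E) * cupDiff (v i) (sortedCup v E) σ := by
  have h_length : ((E.sort (· ≤ ·)).filter (· < i)).length = #{j ∈ insert i E | j < i} := by
    rw [filter_insert, if_neg (lt_irrefl i), ← Multiset.coe_card, ← Multiset.filter_coe, sort_eq]
    rfl
  rw [sortedCup, sort_insert_eq_orderedInsert hi,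
    cupDiffs_orderedInsert (pairwise_sort _ _) (by simpa using hi) hv, h_length, dirSign]
  rfl

theorem exists_of_sortedCup_ne_zero {v : ι → (Fin m → ℤ) → ℤ} {i : ι} {E : Finset ι} (hi : i ∈ E)
    {σ : ElemCube m} (hv : Pairwise fun i j => EdgewiseOrthogonal (eCube σ.1 σ.2) (v i) (v j))
    (h : sortedCup v E σ ≠ 0) : ∃ k ∈ σ.2, v i (upperFace k σ).1 ≠ v i σ.1 := by
  rw [← insert_erase hi, sortedCup_insert (notMem_erase i E) hv] at h
  obtain ⟨k, hk, hne, -⟩ := exists_of_cupDiff_ne_zero (right_ne_zero_of_mul h)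
  exact ⟨k, hk, hne⟩

theorem card_eq_of_sortedCup_ne_zero {v : ι → (Fin m → ℤ) → ℤ} {E : Finset ι} {σ : ElemCube m}
    (h : sortedCup v E σ ≠ 0) : #σ.2 = #E := by
  simpa using card_eq_length_of_cupDiffs_ne_zero h

end OrthogonalFamilies

section Determinant

open Finset

variable {m : ℕ}

theorem filter_lt_orderEmbOfFin {ι : Type*} [LinearOrder ι] {q : ℕ} (D : Finset ι) (hD : #D = q)
    (j : Fin q) :
    {i ∈ D | i < D.orderEmbOfFin hD j} = (Iio j).map (D.orderEmbOfFin hD).toEmbedding := by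
  calc
    _ = {i ∈ univ.map (D.orderEmbOfFin hD).toEmbedding | i < D.orderEmbOfFin hD j} := by
      rw [map_orderEmbOfFin_univ]
    _ = _ := by
      rw [filter_map]
      exact congrArg _ (by ext; simp)

theorem dirSign_orderEmbOfFin {ι : Type*} [LinearOrder ι] {q : ℕ} (D : Finset ι) (hD : #D = q)
    (j : Fin q) : dirSign (D.orderEmbOfFin hD j) D = (-1) ^ (j : ℕ) := by
  rw [dirSign, filter_lt_orderEmbOfFin, card_map, Fin.card_Iio]

theorem orderEmbOfFin_erase {ι : Type*} [LinearOrder ι] {q : ℕ} (D : Finset ι)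
    (hD : #D = q + 1) (j : Fin (q + 1)) (hj : #(D.erase (D.orderEmbOfFin hD j)) = q) :
    (D.erase (D.orderEmbOfFin hD j)).orderEmbOfFin hj = D.orderEmbOfFin hD ∘ j.succAbove := by
  refine (orderEmbOfFin_unique hj (fun i => mem_erase.2 ⟨fun h => ?_, orderEmbOfFin_mem _ _ _⟩)
    ((D.orderEmbOfFin hD).strictMono.comp (Fin.strictMono_succAbove j))).symm
  exact Fin.succAbove_ne j i ((D.orderEmbOfFin hD).injective h)

/-- On a cube where every `v i` is affine, the defining recursion of the cup product is the Laplace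
expansion along the first row of the matrix of increments. -/
theorem cupDiffs_eq_det {q : ℕ} (v : Fin q → (Fin m → ℤ) → ℤ) (M : Matrix (Fin q) (Fin m) ℤ)
    (σ : ElemCube m) (hσ : #σ.2 = q)
    (h : ∀ i, ∀ k ∈ σ.2, ∀ x ∈ eCube (lowerFace k σ).1 (lowerFace k σ).2,
      v i (x + Pi.single k 1) - v i x = M i k) :
    cupDiffs (List.ofFn v) σ = (M.submatrix id (σ.2.orderEmbOfFin hσ)).det := by
  induction q generalizing σ with
  | zero => simp [cupDiffs, card_eq_zero.1 hσ]
  | succ q ih =>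
    have h_sum (F : Fin m → ℤ) : ∑ k ∈ σ.2, F k = ∑ j, F (σ.2.orderEmbOfFin hσ j) := by
      conv_lhs => rw [← map_orderEmbOfFin_univ σ.2 hσ, sum_map]
      rfl
    rw [List.ofFn_succ, Matrix.det_succ_row_zero, cupDiffs, cupDiff, h_sum]
    refine sum_congr rfl fun j _ => ?_
    have hk := orderEmbOfFin_mem σ.2 hσ j
    set k := σ.2.orderEmbOfFin hσ j with hk_def
    have h_card : #(upperFace k σ).2 = q := by
      rw [upperFace, card_erase_of_mem hk, hσ, Nat.add_sub_cancel]
    have h_incr : v 0 (upperFace k σ).1 - v 0 σ.1 = M 0 k := h 0 k hk _ (corner_mem_eCube _)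
    have h_minor : cupDiffs (List.ofFn fun i : Fin q => v i.succ) (upperFace k σ) =
        ((M.submatrix id (σ.2.orderEmbOfFin hσ)).submatrix Fin.succ j.succAbove).det := by
      rw [ih (fun i => v i.succ) (M.submatrix Fin.succ id) (upperFace k σ) h_card]
      · have h_cols : ⇑((upperFace k σ).2.orderEmbOfFin h_card) =
            σ.2.orderEmbOfFin hσ ∘ j.succAbove := orderEmbOfFin_erase σ.2 hσ j h_card
        rw [h_cols]
        rfl
      · intro i l hl x hx
        rw [lowerFace_upperFace_comm] at hx
        exact h i.succ l (mem_of_mem_erase hl) x (eCube_upperFace_subset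
          (mem_erase.2 ⟨(ne_of_mem_erase hl).symm, hk⟩) hx)
    rw [hk_def, dirSign_orderEmbOfFin, ← hk_def, h_incr, h_minor, mul_assoc]
    rfl

end Determinant

section ImageCoefficients

open Finset

variable {m n : ℕ}

/-- The indicator of the half-space `b i < y i`. On the edges of `ℤ^n` its coboundary is supported
on those which project to the edge `[b i, b i + 1]` of the `i`-th axis. -/
def coordStep (b : Fin n → ℤ) (i : Fin n) (y : Fin n → ℤ) : ℤ := if b i < y i then 1 else 0

/-- The indicator of the affine subspace through `b` spanned by the directions in `E`. -/
def flatIndicator (b : Fin n → ℤ) (E : Finset (Fin n)) (y : Fin n → ℤ) : ℤ :=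
  ∏ j ∈ Eᶜ, if y j = b j then 1 else 0

/-- The coefficient of the cube `τ` in the push-forward of the cube `σ` along `K`. The directions of
`τ` are detected by a cup product of pulled-back `1`-cochains, and the position in the remaining
coordinates is tested at the minimal corner of `σ`. -/
def imageCoeff (K : (Fin m → ℤ) → (Fin n → ℤ)) (τ : ElemCube n) (σ : ElemCube m) : ℤ :=
  flatIndicator τ.1 τ.2 (K σ.1) * sortedCup (fun i x => coordStep τ.1 i (K x)) τ.2 σ

theorem coordStep_add_single_of_ne (b : Fin n → ℤ) {i l : Fin n} (h : i ≠ l) (y : Fin n → ℤ)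
    (s : ℤ) : coordStep b i (y + Pi.single l s) = coordStep b i y := by
  simp [coordStep, h]

theorem edgewiseOrthogonal_coordStep {A : Finset (Fin m → ℤ)} {K : (Fin m → ℤ) → (Fin n → ℤ)}
    (hK : c1Cont A K) (b : Fin n → ℤ) :
    Pairwise fun i j => EdgewiseOrthogonal A (fun x => coordStep b i (K x))
      (fun x => coordStep b j (K x)) := by
  intro i j hij x hx y hy hxy
  rcases hK x hx y hy hxy with h | h
  · simp only [h, sub_self, mul_zero]
  · obtain ⟨l, s, -, hl⟩ := exists_eq_add_single_of_c1Adj h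
    by_cases hil : i = l
    · simp only [hl, coordStep_add_single_of_ne b (hil ▸ hij.symm), sub_self, mul_zero]
    · simp only [hl, coordStep_add_single_of_ne b hil, sub_self, zero_mul]

theorem flatIndicator_eq_mul_insert {b : Fin n → ℤ} {E : Finset (Fin n)} {j : Fin n} (hj : j ∉ E)
    (y : Fin n → ℤ) :
    flatIndicator b E y = (if y j = b j then 1 else 0) * flatIndicator b (insert j E) y := by
  rw [flatIndicator, flatIndicator, compl_insert,
    mul_prod_erase _ (fun j => if y j = b j then 1 else 0) (mem_compl.2 hj)]

theorem flatIndicator_add_single {b : Fin n → ℤ} {E : Finset (Fin n)} {l : Fin n} (hl : l ∈ E)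
    (y : Fin n → ℤ) (s : ℤ) :
    flatIndicator b E (y + Pi.single l s) = flatIndicator b E y :=
  prod_congr rfl fun j hj => by
    have hjl : j ≠ l := fun h => mem_compl.1 hj (h ▸ hl)
    simp [hjl]

theorem flatIndicator_sub_single {b : Fin n → ℤ} {E : Finset (Fin n)} {l : Fin n} (hl : l ∈ E)
    (y : Fin n → ℤ) (s : ℤ) :
    flatIndicator (b - Pi.single l s) E y = flatIndicator b E y :=
  prod_congr rfl fun j hj => by
    have hjl : j ≠ l := fun h => mem_compl.1 hj (h ▸ hl)
    simp [hjl]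

theorem coordStep_sub_single_of_ne (b : Fin n → ℤ) {i l : Fin n} (h : i ≠ l) (s : ℤ)
    (y : Fin n → ℤ) : coordStep (b - Pi.single l s) i y = coordStep b i y := by
  simp [coordStep, h]

theorem coordStep_sub_single_self (b : Fin n → ℤ) (i : Fin n) (y : Fin n → ℤ) :
    coordStep (b - Pi.single i 1) i y = coordStep b i y + if y i = b i then 1 else 0 := by
  simp only [coordStep, Pi.sub_apply, Pi.single_eq_same]
  split_ifs <;> omega

/-- Only one coordinate changes between `y` and `z`, so the indicator, which is a product over the
coordinates outside `E`, changes by a single one of these summands. -/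
theorem flatIndicator_sub (b : Fin n → ℤ) (E : Finset (Fin n)) {y z : Fin n → ℤ}
    (h : y = z ∨ c1Adj y z) :
    flatIndicator b E z - flatIndicator b E y = ∑ j ∈ Eᶜ, flatIndicator b (insert j E) y *
      ((coordStep (b - Pi.single j 1) j z - coordStep (b - Pi.single j 1) j y)
        - (coordStep b j z - coordStep b j y)) := by
  have h_step (j : Fin n) : (coordStep (b - Pi.single j 1) j z - coordStep (b - Pi.single j 1) j y)
        - (coordStep b j z - coordStep b j y) =
      (if z j = b j then 1 else 0) - if y j = b j then 1 else 0 := by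
    rw [coordStep_sub_single_self, coordStep_sub_single_self]
    ring
  simp only [h_step]
  rcases h with rfl | h
  · simp
  obtain ⟨l, s, -, rfl⟩ := exists_eq_add_single_of_c1Adj h
  have h_other (j : Fin n) (hj : j ≠ l) : (y + Pi.single l s : Fin n → ℤ) j = y j := by
    simp [hj]
  by_cases hl : l ∈ E
  · rw [flatIndicator_add_single hl, sub_self]
    refine (sum_eq_zero fun j hj => ?_).symm
    rw [h_other j fun h => mem_compl.1 hj (h ▸ hl), sub_self, mul_zero]
  · rw [sum_eq_single_of_mem l (mem_compl.2 hl) fun j _ hj => by rw [h_other j hj]; ring,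
      flatIndicator_eq_mul_insert hl, flatIndicator_eq_mul_insert hl y,
      flatIndicator_add_single (mem_insert_self l E)]
    ring

/-- The cube which has `τ` as its face at maximal `j`-th coordinate. -/
def cubeBelow (j : Fin n) (τ : ElemCube n) : ElemCube n := (τ.1 - Pi.single j 1, insert j τ.2)

/-- The cube which has `τ` as its face at minimal `j`-th coordinate. -/
def cubeAbove (j : Fin n) (τ : ElemCube n) : ElemCube n := (τ.1, insert j τ.2)

theorem sortedCup_congr {ι : Type*} [LinearOrder ι] {v w : ι → (Fin m → ℤ) → ℤ} {E : Finset ι}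
    (h : ∀ i ∈ E, v i = w i) : sortedCup v E = sortedCup w E := by
  rw [sortedCup, sortedCup, List.map_congr_left fun i hi => h i ((mem_sort _).1 hi)]

theorem imageCoeff_cubeBelow_sub_cubeAbove {K : (Fin m → ℤ) → (Fin n → ℤ)} {τ : ElemCube n}
    {σ : ElemCube m} (hK : c1Cont (eCube σ.1 σ.2) K) {j : Fin n} (hj : j ∉ τ.2) :
    dirSign j (insert j τ.2) * (imageCoeff K (cubeBelow j τ) σ - imageCoeff K (cubeAbove j τ) σ) =
      flatIndicator τ.1 (insert j τ.2) (K σ.1) *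
        (cupDiff (fun x => coordStep (τ.1 - Pi.single j 1) j (K x))
            (sortedCup (fun i x => coordStep τ.1 i (K x)) τ.2) σ
          - cupDiff (fun x => coordStep τ.1 j (K x))
            (sortedCup (fun i x => coordStep τ.1 i (K x)) τ.2) σ) := by
  have h_shift : sortedCup (fun i x => coordStep (τ.1 - Pi.single j 1) i (K x)) τ.2 =
      sortedCup (fun i x => coordStep τ.1 i (K x)) τ.2 :=
    sortedCup_congr fun i hi => funext fun x =>
      coordStep_sub_single_of_ne _ (ne_of_mem_of_not_mem hi hj) _ _
  simp only [imageCoeff, cubeBelow, cubeAbove]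
  rw [flatIndicator_sub_single (mem_insert_self j τ.2),
    sortedCup_insert hj (edgewiseOrthogonal_coordStep hK _),
    sortedCup_insert hj (edgewiseOrthogonal_coordStep hK _), h_shift]
  linear_combination (flatIndicator τ.1 (insert j τ.2) (K σ.1) *
        (cupDiff (fun x => coordStep (τ.1 - Pi.single j 1) j (K x))
            (sortedCup (fun i x => coordStep τ.1 i (K x)) τ.2) σ
          - cupDiff (fun x => coordStep τ.1 j (K x))
            (sortedCup (fun i x => coordStep τ.1 i (K x)) τ.2) σ)) *
    dirSign_mul_self j (insert j τ.2)

/-- The push-forward is a chain map: the two sides are the coefficients of `τ` in the push-forward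
of the boundary of `σ` and in the boundary of the push-forward of `σ`. -/
theorem coboundary_imageCoeff {K : (Fin m → ℤ) → (Fin n → ℤ)} (τ : ElemCube n)
    {σ : ElemCube m} (hK : c1Cont (eCube σ.1 σ.2) K) :
    coboundary (imageCoeff K τ) σ = ∑ j ∈ τ.2ᶜ, dirSign j (insert j τ.2) *
      (imageCoeff K (cubeBelow j τ) σ - imageCoeff K (cubeAbove j τ) σ) := by
  calc coboundary (imageCoeff K τ) σ
      = cupDiff (fun x => flatIndicator τ.1 τ.2 (K x))
          (sortedCup (fun i x => coordStep τ.1 i (K x)) τ.2) σ := by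
        unfold imageCoeff
        rw [coboundary_mul (fun x => flatIndicator τ.1 τ.2 (K x)), sortedCup, coboundary_cupDiffs,
          Pi.zero_apply, mul_zero, add_zero]
    _ = ∑ j ∈ τ.2ᶜ, flatIndicator τ.1 (insert j τ.2) (K σ.1) *
        (cupDiff (fun x => coordStep (τ.1 - Pi.single j 1) j (K x))
            (sortedCup (fun i x => coordStep τ.1 i (K x)) τ.2) σ
          - cupDiff (fun x => coordStep τ.1 j (K x))
            (sortedCup (fun i x => coordStep τ.1 i (K x)) τ.2) σ) := by
        simp only [cupDiff, ← sum_sub_distrib, mul_sum]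
        rw [sum_comm]
        refine sum_congr rfl fun k hk => ?_
        rw [flatIndicator_sub τ.1 τ.2 (hK _ (corner_mem_eCube σ) _ (upperFace_corner_mem_eCube hk)
          (c1Adj_add_single _ k)), sum_mul, mul_sum]
        exact sum_congr rfl fun j _ => by ring
    _ = _ := sum_congr rfl fun j hj =>
        (imageCoeff_cubeBelow_sub_cubeAbove hK (mem_compl.1 hj)).symm

end ImageCoefficients

section AffineCubes

open Finset

variable {m n : ℕ}

/-- The maximal vertex of a cube. -/
def topVertex (σ : ElemCube m) : Fin m → ℤ := fun i => σ.1 i + if i ∈ σ.2 then 1 else 0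

theorem topVertex_mem_eCube (σ : ElemCube m) : topVertex σ ∈ eCube σ.1 σ.2 :=
  mem_eCube.2 fun i => by by_cases hi : i ∈ σ.2 <;> simp [topVertex, hi]

theorem topVertex_upperFace {k : Fin m} {σ : ElemCube m} (hk : k ∈ σ.2) :
    topVertex (upperFace k σ) = topVertex σ := by
  funext i
  by_cases hik : i = k
  · simp [topVertex, upperFace, hik, hk]
  · simp [topVertex, upperFace, hik]

theorem l1Dist_corner {σ : ElemCube m} {x : Fin m → ℤ} (hx : x ∈ eCube σ.1 σ.2) :
    l1Dist σ.1 x = ∑ k ∈ σ.2, (x k - σ.1 k) := by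
  have h_const : ∀ k ∉ σ.2, |σ.1 k - x k| = 0 := fun k hk => by
    have := mem_eCube.1 hx k
    simp_all
  rw [l1Dist, ← sum_subset (subset_univ σ.2) fun k _ hk => h_const k hk]
  refine sum_congr rfl fun k _ => ?_
  rcases mem_eCube.1 hx k with h | ⟨-, h⟩ <;> simp [h]

theorem l1Dist_corner_add_l1Dist_topVertex {σ : ElemCube m} {x : Fin m → ℤ}
    (hx : x ∈ eCube σ.1 σ.2) : l1Dist σ.1 x + l1Dist x (topVertex σ) = #σ.2 := by
  have h_one (i : Fin m) :
      |σ.1 i - x i| + |x i - topVertex σ i| = if i ∈ σ.2 then 1 else 0 := by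
    rcases mem_eCube.1 hx i with h | ⟨hi, h⟩
    · by_cases hi : i ∈ σ.2 <;> simp [topVertex, hi, h]
    · simp [topVertex, hi, h]
  rw [l1Dist, l1Dist, ← sum_add_distrib, sum_congr rfl fun i _ => h_one i]
  simp

theorem eq_add_single_of_coordStep_ne {b : Fin n → ℤ} {i : Fin n} {y z : Fin n → ℤ}
    (h : y = z ∨ c1Adj y z) (hne : coordStep b i z ≠ coordStep b i y) :
    ∃ s : ℤ, (s = 1 ∧ y i = b i ∨ s = -1 ∧ y i = b i + 1) ∧ z = y + Pi.single i s := by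
  rcases h with rfl | h
  · exact absurd rfl hne
  obtain ⟨l, s, hs, rfl⟩ := exists_eq_add_single_of_c1Adj h
  obtain rfl : i = l := by
    by_contra hil
    exact hne (coordStep_add_single_of_ne b hil y s)
  refine ⟨s, ?_, rfl⟩
  simp only [coordStep, Pi.add_apply, Pi.single_eq_same] at hne
  split_ifs at hne <;> omega

/-- The paths along which the cup product is evaluated change each coordinate in `l` exactly
once. -/
theorem map_corner_eq_map_topVertex_iff {K : (Fin m → ℤ) → (Fin n → ℤ)} {σ : ElemCube m}
    (hK : c1Cont (eCube σ.1 σ.2) K) {b : Fin n → ℤ} {l : List (Fin n)} (hl : l.Nodup)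
    (h : cupDiffs (l.map fun i x => coordStep b i (K x)) σ ≠ 0) (j : Fin n) :
    K σ.1 j = K (topVertex σ) j ↔ j ∉ l := by
  induction l generalizing σ with
  | nil =>
    have hσ : σ.2 = ∅ := by simpa [cupDiffs] using h
    simp [show topVertex σ = σ.1 from funext fun i => by simp [topVertex, hσ]]
  | cons i l ih =>
    rw [List.nodup_cons] at hl
    obtain ⟨k, hk, hne, hl_ne⟩ := exists_of_cupDiff_ne_zero h
    obtain ⟨s, hs, h_step⟩ := eq_add_single_of_coordStep_ne
      (hK _ (corner_mem_eCube σ) _ (upperFace_corner_mem_eCube hk) (c1Adj_add_single _ k)) hne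
    have ih := ih (hK.mono (eCube_upperFace_subset hk)) hl.2 hl_ne
    rw [topVertex_upperFace hk, h_step] at ih
    by_cases hji : j = i
    · subst hji
      have := ih.2 hl.1
      simp only [Pi.add_apply, Pi.single_eq_same] at this
      simp only [List.mem_cons, true_or, not_true_eq_false, iff_false]
      omega
    · simpa [hji] using ih

/-- The image of a diagonal of the cube is as long as the diagonal, so geodesics from the corner are
mapped to geodesics. -/
theorem l1Dist_map_corner {K : (Fin m → ℤ) → (Fin n → ℤ)} {σ : ElemCube m}
    (hK : c1Cont (eCube σ.1 σ.2) K) {b : Fin n → ℤ} {E : Finset (Fin n)}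
    (h : sortedCup (fun i x => coordStep b i (K x)) E σ ≠ 0) {x : Fin m → ℤ}
    (hx : x ∈ eCube σ.1 σ.2) : l1Dist (K σ.1) (K x) = l1Dist σ.1 x := by
  have h_iff := map_corner_eq_map_topVertex_iff hK (sort_nodup E _) h
  have h_diag : (#E : ℤ) ≤ l1Dist (K σ.1) (K (topVertex σ)) := by
    rw [card_eq_sum_ones, Nat.cast_sum]
    refine (sum_le_sum fun i hi => ?_).trans
      (sum_le_univ_sum_of_nonneg (s := E) fun i => abs_nonneg (K σ.1 i - K (topVertex σ) i))
    rw [Nat.cast_one]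
    exact Int.one_le_abs (sub_ne_zero.2 fun h_eq => (h_iff i).1 h_eq ((mem_sort _).2 hi))
  have h_split := l1Dist_corner_add_l1Dist_topVertex hx
  rw [card_eq_of_sortedCup_ne_zero h] at h_split
  linarith [l1Dist_triangle (K σ.1) (K x) (K (topVertex σ)),
    l1Dist_map_le_of_c1Cont hK (corner_mem_eCube σ) hx,
    l1Dist_map_le_of_c1Cont hK hx (topVertex_mem_eCube σ)]

theorem exists_equiv_map_upperFace_corner {K : (Fin m → ℤ) → (Fin n → ℤ)} {σ : ElemCube m}
    (hK : c1Cont (eCube σ.1 σ.2) K) {b : Fin n → ℤ} {E : Finset (Fin n)}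
    (h : sortedCup (fun i x => coordStep b i (K x)) E σ ≠ 0) :
    ∃ (κ : {i // i ∈ E} ≃ {k // k ∈ σ.2}) (s : {i // i ∈ E} → ℤ), ∀ i,
      (s i = 1 ∧ K σ.1 i = b i ∨ s i = -1 ∧ K σ.1 i = b i + 1) ∧
      K (upperFace (κ i) σ).1 = K σ.1 + Pi.single (i : Fin n) (s i) := by
  have h_edge (i : {i // i ∈ E}) : ∃ (k : {k // k ∈ σ.2}) (s : ℤ),
      (s = 1 ∧ K σ.1 i = b i ∨ s = -1 ∧ K σ.1 i = b i + 1) ∧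
      K (upperFace k σ).1 = K σ.1 + Pi.single (i : Fin n) s := by
    obtain ⟨k, hk, hne⟩ :=
      exists_of_sortedCup_ne_zero i.2 (edgewiseOrthogonal_coordStep hK b) h
    exact ⟨⟨k, hk⟩, eq_add_single_of_coordStep_ne
      (hK _ (corner_mem_eCube σ) _ (upperFace_corner_mem_eCube hk) (c1Adj_add_single _ k)) hne⟩
  choose κ s hs h_step using h_edge
  have h_inj : Function.Injective κ := by
    intro i j hij
    by_contra hne
    have h_single := h_step i
    rw [hij, h_step j] at h_single
    have h_zero := congrFun (add_left_cancel h_single) i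
    rw [Pi.single_eq_same, Pi.single_eq_of_ne fun h => hne (Subtype.ext h)] at h_zero
    have := hs i
    omega
  have h_card : Fintype.card {i // i ∈ E} = Fintype.card {k // k ∈ σ.2} := by
    simpa using (card_eq_of_sortedCup_ne_zero h).symm
  exact ⟨.ofBijective κ ((Fintype.bijective_iff_injective_and_card κ).2 ⟨h_inj, h_card⟩), s,
    fun i => ⟨hs i, h_step i⟩⟩

/-- `K` is isometric on geodesics from the corner, so `K x` is closer than `K σ.1` to the image of
the neighbour of the corner in every direction in which `x` lies. -/
theorem one_le_mul_sub_of_map_upperFace_corner {K : (Fin m → ℤ) → (Fin n → ℤ)} {σ : ElemCube m}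
    (hK : c1Cont (eCube σ.1 σ.2) K) {x : Fin m → ℤ} (hx : x ∈ eCube σ.1 σ.2)
    (h_isom : l1Dist (K σ.1) (K x) = l1Dist σ.1 x) {k : Fin m} (hk : k ∈ σ.2)
    (hxk : x k = σ.1 k + 1) {i : Fin n} {s : ℤ} (hs : s = 1 ∨ s = -1)
    (h_step : K (upperFace k σ).1 = K σ.1 + Pi.single i s) : 1 ≤ s * (K x i - K σ.1 i) := by
  have h_near := l1Dist_map_le_of_c1Cont hK (upperFace_corner_mem_eCube hk) hx
  rw [h_step, l1Dist_add_single, h_isom, upperFace, l1Dist_add_single, hxk, sub_self, abs_zero,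
    sub_add_cancel_left, abs_neg, abs_one] at h_near
  have h_le := le_abs_self (K σ.1 i + s - K x i)
  have h_neg_le := neg_le_abs (K σ.1 i + s - K x i)
  rcases hs with rfl | rfl <;> rcases abs_cases (K σ.1 i - K x i) with h | h <;> omega

/-- On the cube `σ` the map `K` is affine, and its linear part is given by a bijection `κ` from the
coordinate directions in `E` to those of `σ` and signs `s`. -/
def IsSignedAffineOn (K : (Fin m → ℤ) → (Fin n → ℤ)) (σ : ElemCube m) (E : Finset (Fin n))
    (κ : {i // i ∈ E} ≃ {k // k ∈ σ.2}) (s : {i // i ∈ E} → ℤ) : Prop :=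
  ∀ x ∈ eCube σ.1 σ.2, (∀ i : {i // i ∈ E}, K x i = K σ.1 i + s i * (x (κ i) - σ.1 (κ i))) ∧
    ∀ j ∉ E, K x j = K σ.1 j

/-- The hypotheses bound the two sides of `l1Dist (K σ.1) (K x) = l1Dist σ.1 x` against each other
term by term. -/
theorem abs_map_corner_sub_eq {K : (Fin m → ℤ) → (Fin n → ℤ)} {σ : ElemCube m} {x : Fin m → ℤ}
    (hx : x ∈ eCube σ.1 σ.2) (h_isom : l1Dist (K σ.1) (K x) = l1Dist σ.1 x)
    {E : Finset (Fin n)} {κ : {i // i ∈ E} ≃ {k // k ∈ σ.2}}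
    (h_le : ∀ i : {i // i ∈ E}, x (κ i) - σ.1 (κ i) ≤ |K σ.1 i - K x i|) :
    (∀ i : {i // i ∈ E}, |K σ.1 i - K x i| = x (κ i) - σ.1 (κ i)) ∧
      ∀ j ∉ E, K x j = K σ.1 j := by
  let t : Fin n → ℤ := fun j => if hj : j ∈ E then x (κ ⟨j, hj⟩) - σ.1 (κ ⟨j, hj⟩) else 0
  have h_inside (i : {i // i ∈ E}) : t i = x (κ i) - σ.1 (κ i) := dif_pos i.2
  have h_outside {j : Fin n} (hj : j ∉ E) : t j = 0 := dif_neg hj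
  have h_term (j : Fin n) : t j ≤ |K σ.1 j - K x j| := by
    by_cases hj : j ∈ E
    · exact (h_inside ⟨j, hj⟩).trans_le (h_le ⟨j, hj⟩)
    · exact (h_outside hj).trans_le (abs_nonneg _)
  have h_sum : ∑ j, t j = ∑ j, |K σ.1 j - K x j| := by
    have h_total : ∑ j, t j = l1Dist σ.1 x := by
      rw [l1Dist_corner hx, ← sum_subset (subset_univ E) fun j _ hj => h_outside hj,
        ← sum_coe_sort E, ← sum_coe_sort σ.2, ← κ.sum_comp]
      exact sum_congr rfl fun i _ => h_inside i
    rw [h_total, ← h_isom, l1Dist]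
  have h_eq (j : Fin n) : t j = |K σ.1 j - K x j| :=
    (sum_eq_sum_iff_of_le fun j _ => h_term j).1 h_sum j (mem_univ j)
  refine ⟨fun i => (h_eq i).symm.trans (h_inside i), fun j hj => ?_⟩
  exact (sub_eq_zero.1 (abs_eq_zero.1 ((h_eq j).symm.trans (h_outside hj)))).symm

theorem isSignedAffineOn_of_map_upperFace_corner {K : (Fin m → ℤ) → (Fin n → ℤ)} {σ : ElemCube m}
    (hK : c1Cont (eCube σ.1 σ.2) K)
    (h_isom : ∀ x ∈ eCube σ.1 σ.2, l1Dist (K σ.1) (K x) = l1Dist σ.1 x) {E : Finset (Fin n)}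
    {κ : {i // i ∈ E} ≃ {k // k ∈ σ.2}} {s : {i // i ∈ E} → ℤ} (hs : ∀ i, s i = 1 ∨ s i = -1)
    (h_step : ∀ i, K (upperFace (κ i) σ).1 = K σ.1 + Pi.single (i : Fin n) (s i)) :
    IsSignedAffineOn K σ E κ s := by
  intro x hx
  have h_move (i : {i // i ∈ E}) (hi : x (κ i) = σ.1 (κ i) + 1) : 1 ≤ s i * (K x i - K σ.1 i) :=
    one_le_mul_sub_of_map_upperFace_corner hK hx (h_isom x hx) (κ i).2 hi (hs i) (h_step i)
  have h_le (i : {i // i ∈ E}) : x (κ i) - σ.1 (κ i) ≤ |K σ.1 i - K x i| := by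
    rcases mem_eCube.1 hx (κ i) with h | ⟨-, h⟩
    · simp [h]
    · rw [h, add_sub_cancel_left, abs_sub_comm]
      exact Int.one_le_abs (right_ne_zero_of_mul (zero_lt_one.trans_le (h_move i h)).ne')
  obtain ⟨h_abs, h_const⟩ := abs_map_corner_sub_eq hx (h_isom x hx) h_le
  refine ⟨fun i => ?_, h_const⟩
  have h_abs := h_abs i
  rcases mem_eCube.1 hx (κ i) with h | ⟨-, h⟩
  · rw [h, sub_self, abs_eq_zero] at h_abs
    rw [h]
    linarith
  · have h_pos := h_move i h
    rw [h, add_sub_cancel_left, abs_sub_comm] at h_abs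
    rw [h]
    rcases hs i with hi | hi <;> rw [hi] at h_pos ⊢ <;>
      rcases abs_cases (K x i - K σ.1 i) with h' | h' <;> omega

theorem exists_isSignedAffineOn_of_imageCoeff_ne_zero {K : (Fin m → ℤ) → (Fin n → ℤ)}
    {τ : ElemCube n} {σ : ElemCube m} (hK : c1Cont (eCube σ.1 σ.2) K)
    (h : imageCoeff K τ σ ≠ 0) :
    ∃ κ s, IsSignedAffineOn K σ τ.2 κ s ∧
      (∀ i, s i = 1 ∧ K σ.1 i = τ.1 i ∨ s i = -1 ∧ K σ.1 i = τ.1 i + 1) ∧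
      ∀ j ∉ τ.2, K σ.1 j = τ.1 j := by
  have h_cup := right_ne_zero_of_mul h
  obtain ⟨κ, s, hκ⟩ := exists_equiv_map_upperFace_corner hK h_cup
  refine ⟨κ, s, isSignedAffineOn_of_map_upperFace_corner hK
    (fun x hx => l1Dist_map_corner hK h_cup hx) (fun i => (hκ i).1.imp And.left And.left)
    fun i => (hκ i).2, fun i => (hκ i).1, fun j hj => ?_⟩
  have h_flat := prod_ne_zero_iff.1 (left_ne_zero_of_mul h) j (mem_compl.2 hj)
  by_contra hne
  simp [hne] at h_flat

theorem image_eCube_of_imageCoeff_ne_zero {K : (Fin m → ℤ) → (Fin n → ℤ)}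
    {τ : ElemCube n} {σ : ElemCube m} (hK : c1Cont (eCube σ.1 σ.2) K)
    (h : imageCoeff K τ σ ≠ 0) : (eCube σ.1 σ.2).image K = eCube τ.1 τ.2 := by
  obtain ⟨κ, s, h_affine, hs, h_base⟩ := exists_isSignedAffineOn_of_imageCoeff_ne_zero hK h
  have h_coord {x : Fin m → ℤ} (hx : x ∈ eCube σ.1 σ.2) (i : {i // i ∈ τ.2}) :
      K x i = τ.1 i ∨ K x i = τ.1 i + 1 := by
    have h_val := (h_affine x hx).1 i
    rcases hs i with ⟨hi, hb⟩ | ⟨hi, hb⟩ <;> rcases mem_eCube.1 hx (κ i) with h | ⟨-, h⟩ <;>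
      rw [hi, h] at h_val <;> omega
  refine Subset.antisymm (image_subset_iff.2 fun x hx => mem_eCube.2 fun i => ?_) fun y hy => ?_
  · by_cases hi : i ∈ τ.2
    · exact (h_coord hx ⟨i, hi⟩).imp_right fun h => ⟨hi, h⟩
    · exact Or.inl (((h_affine x hx).2 i hi).trans (h_base i hi))
  · let x : Fin m → ℤ := fun k => if hk : k ∈ σ.2 then
      σ.1 k + s (κ.symm ⟨k, hk⟩) * (y (κ.symm ⟨k, hk⟩) - K σ.1 (κ.symm ⟨k, hk⟩)) else σ.1 k
    have hx : x ∈ eCube σ.1 σ.2 := mem_eCube.2 fun k => by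
      by_cases hk : k ∈ σ.2
      · have hy := mem_eCube.1 hy (κ.symm ⟨k, hk⟩)
        simp only [x, hk, dif_pos, true_and]
        rcases hs (κ.symm ⟨k, hk⟩) with ⟨hi, hb⟩ | ⟨hi, hb⟩ <;> rw [hi, hb] <;> omega
      · exact Or.inl (dif_neg hk)
    refine mem_image.2 ⟨x, hx, funext fun i => ?_⟩
    by_cases hi : i ∈ τ.2
    · have h_x : x (κ ⟨i, hi⟩) = σ.1 (κ ⟨i, hi⟩) + s ⟨i, hi⟩ * (y i - K σ.1 i) := by simp [x]
      rw [(h_affine x hx).1 ⟨i, hi⟩, h_x]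
      rcases hs ⟨i, hi⟩ with ⟨hi, -⟩ | ⟨hi, -⟩ <;> rw [hi] <;> ring
    · have h_y := mem_eCube.1 hy i
      rw [(h_affine x hx).2 i hi, h_base i hi]
      simp_all

/-- For an affine map the coefficient is a minor of a signed permutation matrix. -/
theorem imageCoeff_self_eq_sign_mul_prod {f : (Fin m → ℤ) → (Fin m → ℤ)} {σ : ElemCube m}
    (hf : MapsInto (eCube σ.1 σ.2) (eCube σ.1 σ.2) f) (π : Equiv.Perm {i // i ∈ σ.2})
    (s : {i // i ∈ σ.2} → ℤ)
    (h_affine : ∀ x ∈ eCube σ.1 σ.2, ∀ i : {i // i ∈ σ.2},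
      f x i = f σ.1 i + s i * (x (π i) - σ.1 (π i))) :
    imageCoeff f σ σ = (Equiv.Perm.sign π : ℤ) * ∏ i, s i := by
  have h_flat : flatIndicator σ.1 σ.2 (f σ.1) = 1 := prod_eq_one fun j hj =>
    if_pos ((mem_eCube.1 (hf _ (corner_mem_eCube σ)) j).resolve_right
      fun h => mem_compl.1 hj h.1)
  have h_step {x : Fin m → ℤ} (hx : x ∈ eCube σ.1 σ.2) (i : Fin m) :
      coordStep σ.1 i (f x) = f x i - σ.1 i := by
    rcases mem_eCube.1 (hf x hx) i with h | ⟨-, h⟩ <;> simp [coordStep, h]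
  have h_sort : (σ.2.sort (· ≤ ·)).map (fun i x => coordStep σ.1 i (f x)) =
      List.ofFn fun i x => coordStep σ.1 (σ.2.orderEmbOfFin rfl i) (f x) :=
    List.ext_getElem (by simp) fun i _ _ => by simp [orderEmbOfFin_apply]
  let e := (σ.2.orderIsoOfFin rfl).toEquiv
  let M : Matrix (Fin #σ.2) (Fin m) ℤ := fun i k => if π (e i) = k then s (e i) else 0
  have h_matrix : M.submatrix id (σ.2.orderEmbOfFin rfl) =
      (Matrix.diagonal s * π.toPEquiv.toMatrix).submatrix e e := by
    ext i j
    rw [Matrix.submatrix_apply, Matrix.submatrix_apply, Matrix.diagonal_mul,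
      PEquiv.toMatrix_apply]
    simp [M, e, Subtype.ext_iff]
  rw [imageCoeff, h_flat, one_mul, sortedCup, h_sort, cupDiffs_eq_det _ M σ rfl, h_matrix,
    Matrix.det_submatrix_equiv_self, Matrix.det_mul, Matrix.det_diagonal, Matrix.det_permutation,
    mul_comm]
  · simp
  · intro i k hk x hx
    have hx' := eCube_lowerFace_subset k σ hx
    have hxk := add_single_mem_eCube hk hx
    have h_old := h_affine x hx' (e i)
    have h_new := h_affine _ hxk (e i)
    rw [h_step hx', h_step hxk]
    change f _ (e i) - _ - (f x (e i) - _) = if π (e i) = k then s (e i) else 0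
    rw [h_old, h_new]
    by_cases hπ : π (e i) = k
    · simp [hπ]
      ring
    · simp [hπ]

theorem cubeSign_eq_imageCoeff {f : (Fin m → ℤ) → (Fin m → ℤ)} {σ : ElemCube m}
    (hf : c1Cont (eCube σ.1 σ.2) f) (h_maps : MapsInto (eCube σ.1 σ.2) (eCube σ.1 σ.2) f) :
    cubeSign f σ.1 σ.2 = imageCoeff f σ σ := by
  unfold cubeSign
  split_ifs with h
  · exact (imageCoeff_self_eq_sign_mul_prod h_maps _ _ h.choose_spec.2).symm
  · by_contra! hne
    obtain ⟨κ, s, h_affine, hs, -⟩ := exists_isSignedAffineOn_of_imageCoeff_ne_zero hf hne.symm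
    exact h ⟨(κ, s), fun i => (hs i).imp And.left And.left, fun x hx => (h_affine x hx).1⟩

end AffineCubes

section Prism

open Finset

variable {m n : ℕ}

/-- The copy `{t} × σ` of the cube `σ`. -/
@[simps]
def sliceCube (t : ℤ) (σ : ElemCube m) : ElemCube (m + 1) :=
  (Fin.cons t σ.1, σ.2.map (Fin.succEmb m))

/-- The prism `{0, 1} × σ`. -/
@[simps]
def prismCube (σ : ElemCube m) : ElemCube (m + 1) :=
  (Fin.cons 0 σ.1, insert 0 (σ.2.map (Fin.succEmb m)))

theorem zero_notMem_map_succEmb (D : Finset (Fin m)) : 0 ∉ D.map (Fin.succEmb m) := by simp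

theorem cons_add_single_succ (t : ℤ) (x : Fin m → ℤ) (k : Fin m) :
    (Fin.cons t x + Pi.single k.succ 1 : Fin (m + 1) → ℤ) = Fin.cons t (x + Pi.single k 1) := by
  funext i
  cases i using Fin.cases <;> simp [Pi.single_apply]

theorem map_succEmb_erase (D : Finset (Fin m)) (k : Fin m) :
    (D.map (Fin.succEmb m)).erase k.succ = (D.erase k).map (Fin.succEmb m) :=
  (map_erase (Fin.succEmb m) D k).symm

theorem upperFace_sliceCube (t : ℤ) (k : Fin m) (σ : ElemCube m) :
    upperFace k.succ (sliceCube t σ) = sliceCube t (upperFace k σ) :=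
  Prod.ext (cons_add_single_succ t σ.1 k) (map_succEmb_erase σ.2 k)

theorem upperFace_prismCube_succ (k : Fin m) (σ : ElemCube m) :
    upperFace k.succ (prismCube σ) = prismCube (upperFace k σ) :=
  Prod.ext (cons_add_single_succ 0 σ.1 k)
    ((erase_insert_of_ne (Fin.succ_ne_zero k).symm).trans
      (congrArg (insert 0) (map_succEmb_erase σ.2 k)))

theorem lowerFace_prismCube_succ (k : Fin m) (σ : ElemCube m) :
    lowerFace k.succ (prismCube σ) = prismCube (lowerFace k σ) :=
  Prod.ext rfl ((erase_insert_of_ne (Fin.succ_ne_zero k).symm).trans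
    (congrArg (insert 0) (map_succEmb_erase σ.2 k)))

theorem upperFace_prismCube_zero (σ : ElemCube m) :
    upperFace 0 (prismCube σ) = sliceCube 1 σ := by
  refine Prod.ext (funext fun i => ?_) (erase_insert (zero_notMem_map_succEmb σ.2))
  cases i using Fin.cases <;> simp [upperFace, prismCube, sliceCube]

theorem lowerFace_prismCube_zero (σ : ElemCube m) :
    lowerFace 0 (prismCube σ) = sliceCube 0 σ :=
  Prod.ext rfl (erase_insert (zero_notMem_map_succEmb σ.2))

theorem dirSign_succ_map_succEmb (k : Fin m) (D : Finset (Fin m)) :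
    dirSign k.succ (D.map (Fin.succEmb m)) = dirSign k D := by
  rw [dirSign, filter_map, card_map]
  simp [dirSign, Function.comp_def]

theorem dirSign_succ_insert_zero (k : Fin m) (D : Finset (Fin m)) :
    dirSign k.succ (insert 0 (D.map (Fin.succEmb m))) = -dirSign k D := by
  rw [← dirSign_succ_map_succEmb k D, dirSign, filter_insert, if_pos (Fin.succ_pos k),
    card_insert_of_notMem (by simp), pow_succ, mul_neg_one, dirSign]

theorem dirSign_zero (D : Finset (Fin (m + 1))) : dirSign 0 D = 1 := by
  simp [dirSign]

theorem coboundary_prismCube (γ : ElemCube (m + 1) → ℤ) (σ : ElemCube m) :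
    coboundary γ (prismCube σ) =
      γ (sliceCube 1 σ) - γ (sliceCube 0 σ) - coboundary (fun σ => γ (prismCube σ)) σ := by
  rw [coboundary, prismCube_snd, sum_insert (zero_notMem_map_succEmb σ.2), sum_map, dirSign_zero,
    one_mul, upperFace_prismCube_zero, lowerFace_prismCube_zero, sub_eq_add_neg _ (coboundary _ σ),
    coboundary, ← sum_neg_distrib]
  congr 1
  refine sum_congr rfl fun k _ => ?_
  rw [Fin.coe_succEmb, dirSign_succ_insert_zero, upperFace_prismCube_succ,
    lowerFace_prismCube_succ, neg_mul]

theorem cupDiffs_sliceCube (L : List ((Fin (m + 1) → ℤ) → ℤ)) (t : ℤ) (σ : ElemCube m) :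
    cupDiffs L (sliceCube t σ) = cupDiffs (L.map fun v x => v (Fin.cons t x)) σ := by
  induction L generalizing σ with
  | nil => simp [cupDiffs, sliceCube]
  | cons v L ih =>
    rw [List.map_cons, cupDiffs, cupDiffs, cupDiff, cupDiff,
      sliceCube_snd, sum_map]
    refine sum_congr rfl fun k _ => ?_
    rw [Fin.coe_succEmb, dirSign_succ_map_succEmb, upperFace_sliceCube, ih]
    rfl

theorem imageCoeff_sliceCube (K : (Fin (m + 1) → ℤ) → (Fin n → ℤ)) (τ : ElemCube n) (t : ℤ)
    (σ : ElemCube m) :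
    imageCoeff K τ (sliceCube t σ) = imageCoeff (fun x => K (Fin.cons t x)) τ σ := by
  rw [imageCoeff, sortedCup, cupDiffs_sliceCube, List.map_map]
  rfl

/-- Two maps glued to a map on the prism, `f` at the bottom and `g` at the top. -/
def prismMap (f g : (Fin m → ℤ) → (Fin n → ℤ)) (y : Fin (m + 1) → ℤ) : Fin n → ℤ :=
  if y 0 = 0 then f (Fin.tail y) else g (Fin.tail y)

theorem mem_eCube_prismCube {σ : ElemCube m} {y : Fin (m + 1) → ℤ} :
    y ∈ eCube (prismCube σ).1 (prismCube σ).2 ↔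
      (y 0 = 0 ∨ y 0 = 1) ∧ Fin.tail y ∈ eCube σ.1 σ.2 := by
  simp [mem_eCube, Fin.forall_fin_succ, prismCube, Fin.tail]

theorem head_eq_and_c1Adj_tail_or_tail_eq {x y : Fin (m + 1) → ℤ} (h : c1Adj x y) :
    x 0 = y 0 ∧ c1Adj (Fin.tail x) (Fin.tail y) ∨ Fin.tail x = Fin.tail y := by
  obtain ⟨l, s, -, hl⟩ := exists_eq_add_single_of_c1Adj h
  cases l using Fin.cases with
  | zero =>
    right
    funext i
    simp [hl, Fin.tail]
  | succ l =>
    have h_zero : x 0 = y 0 := by simp [hl]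
    rw [c1Adj, Fin.sum_univ_succ, h_zero, sub_self, abs_zero, zero_add] at h
    exact Or.inl ⟨h_zero, h⟩

theorem c1Cont_prismMap {σ : ElemCube m} {f g : (Fin m → ℤ) → (Fin n → ℤ)}
    (hf : c1Cont (eCube σ.1 σ.2) f) (hg : c1Cont (eCube σ.1 σ.2) g)
    (hfg : ∀ x ∈ eCube σ.1 σ.2, f x = g x ∨ c1Adj (f x) (g x)) :
    c1Cont (eCube (prismCube σ).1 (prismCube σ).2) (prismMap f g) := by
  intro x hx y hy hxy
  have hx := (mem_eCube_prismCube.1 hx).2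
  have hy := (mem_eCube_prismCube.1 hy).2
  rw [prismMap, prismMap]
  rcases head_eq_and_c1Adj_tail_or_tail_eq hxy with ⟨h_zero, h_tail⟩ | h_tail
  · rw [h_zero]
    split_ifs
    · exact hf _ hx _ hy h_tail
    · exact hg _ hx _ hy h_tail
  · rw [h_tail]
    split_ifs
    · exact Or.inl rfl
    · exact hfg _ hy
    · exact (hfg _ hy).imp Eq.symm c1Adj_comm.1
    · exact Or.inl rfl

end Prism

section Trace

open Finset Matrix

variable {n : ℕ}

/-- The elementary cubes contained in the digital image `X`. -/
def cubesIn (X : Finset (Fin n → ℤ)) : Finset (ElemCube n) :=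
  {σ ∈ X ×ˢ univ | eCube σ.1 σ.2 ⊆ X}

theorem mem_cubesIn {X : Finset (Fin n → ℤ)} {σ : ElemCube n} :
    σ ∈ cubesIn X ↔ eCube σ.1 σ.2 ⊆ X := by
  simp only [cubesIn, mem_filter, mem_product, mem_univ, and_true, and_iff_right_iff_imp]
  exact fun h => h (corner_mem_eCube σ)

/-- The boundary operator on the cubical chains of `X`, with columns indexed by the cubes to which
it is applied. -/
def boundaryMatrix (X : Finset (Fin n → ℤ)) : Matrix (cubesIn X) (cubesIn X) ℤ :=
  .of fun τ σ => coboundary (Pi.single τ.1 1) σ.1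

/-- The endomorphism of the cubical chains of `X` induced by `f`. -/
def chainMatrix (X : Finset (Fin n → ℤ)) (f : (Fin n → ℤ) → (Fin n → ℤ)) :
    Matrix (cubesIn X) (cubesIn X) ℤ :=
  .of fun τ σ => imageCoeff f τ.1 σ.1

/-- The chain homotopy which sends a cube to the push-forward of the prism over it. -/
def prismMatrix (X : Finset (Fin n → ℤ)) (f g : (Fin n → ℤ) → (Fin n → ℤ)) :
    Matrix (cubesIn X) (cubesIn X) ℤ :=
  .of fun τ σ => imageCoeff (prismMap f g) τ.1 (prismCube σ.1)

/-- The grading involution `(-1)^dim` of the cubical chains of `X`. -/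
def dimSignMatrix (X : Finset (Fin n → ℤ)) : Matrix (cubesIn X) (cubesIn X) ℤ :=
  diagonal fun σ => (-1) ^ #σ.1.2

theorem upperFace_eq_iff {k : Fin n} {ρ τ : ElemCube n} :
    k ∈ ρ.2 ∧ upperFace k ρ = τ ↔ k ∉ τ.2 ∧ cubeBelow k τ = ρ := by
  constructor
  · rintro ⟨hk, rfl⟩
    exact ⟨notMem_erase k _, Prod.ext (add_sub_cancel_right _ _) (insert_erase hk)⟩
  · rintro ⟨hk, rfl⟩
    exact ⟨mem_insert_self k _, Prod.ext (sub_add_cancel _ _) (erase_insert hk)⟩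

theorem lowerFace_eq_iff {k : Fin n} {ρ τ : ElemCube n} :
    k ∈ ρ.2 ∧ lowerFace k ρ = τ ↔ k ∉ τ.2 ∧ cubeAbove k τ = ρ := by
  constructor
  · rintro ⟨hk, rfl⟩
    exact ⟨notMem_erase k _, Prod.ext rfl (insert_erase hk)⟩
  · rintro ⟨hk, rfl⟩
    exact ⟨mem_insert_self k _, Prod.ext rfl (erase_insert hk)⟩

theorem coboundary_single (τ ρ : ElemCube n) :
    coboundary (Pi.single τ 1) ρ = ∑ j ∈ τ.2ᶜ, dirSign j (insert j τ.2) *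
      ((Pi.single (cubeBelow j τ) 1 : ElemCube n → ℤ) ρ -
        (Pi.single (cubeAbove j τ) 1 : ElemCube n → ℤ) ρ) := by
  have h_upper (k : Fin n) : (if k ∈ ρ.2 then
        dirSign k ρ.2 * (Pi.single τ 1 : ElemCube n → ℤ) (upperFace k ρ) else 0) =
      if k ∈ τ.2ᶜ then
        dirSign k (insert k τ.2) * (Pi.single (cubeBelow k τ) 1 : ElemCube n → ℤ) ρ else 0 := by
    simp only [Pi.single_apply, mul_ite, mul_one, mul_zero, mem_compl, ← ite_and, upperFace_eq_iff,
      @eq_comm _ ρ]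
    split_ifs with h
    · rw [← h.2, cubeBelow]
    · rfl
  have h_lower (k : Fin n) : (if k ∈ ρ.2 then
        dirSign k ρ.2 * (Pi.single τ 1 : ElemCube n → ℤ) (lowerFace k ρ) else 0) =
      if k ∈ τ.2ᶜ then
        dirSign k (insert k τ.2) * (Pi.single (cubeAbove k τ) 1 : ElemCube n → ℤ) ρ else 0 := by
    simp only [Pi.single_apply, mul_ite, mul_one, mul_zero, mem_compl, ← ite_and, lowerFace_eq_iff,
      @eq_comm _ ρ]
    split_ifs with h
    · rw [← h.2, cubeAbove]
    · rfl
  simp only [coboundary, mul_sub, sum_sub_distrib]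
  have h_sum (D : Finset (Fin n)) (F : Fin n → ℤ) :
      ∑ k ∈ D, F k = ∑ k, if k ∈ D then F k else 0 := by simp
  rw [h_sum ρ.2, h_sum ρ.2, h_sum τ.2ᶜ, h_sum τ.2ᶜ]
  simp only [h_upper, h_lower]

theorem sum_mul_coboundary_single {A : Finset (ElemCube n)} {σ : ElemCube n}
    (hA : ∀ k ∈ σ.2, upperFace k σ ∈ A ∧ lowerFace k σ ∈ A) (β : ElemCube n → ℤ) :
    ∑ ρ ∈ A, β ρ * coboundary (Pi.single ρ 1) σ = coboundary β σ := by
  simp only [coboundary, mul_sum]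
  rw [sum_comm]
  refine sum_congr rfl fun k hk => ?_
  have h_eval {π : ElemCube n} (hπ : π ∈ A) :
      ∑ ρ ∈ A, β ρ * (Pi.single ρ 1 : ElemCube n → ℤ) π = β π := by
    simp [Pi.single_apply, hπ]
  rw [← h_eval (hA k hk).1, ← h_eval (hA k hk).2, ← sum_sub_distrib, mul_sum]
  exact sum_congr rfl fun ρ _ => by ring

theorem sum_coboundary_single_mul (τ : ElemCube n) {A : Finset (ElemCube n)}
    {γ : ElemCube n → ℤ} (hγ : ∀ ρ ∉ A, γ ρ = 0) :
    ∑ ρ ∈ A, coboundary (Pi.single τ 1) ρ * γ ρ =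
      ∑ j ∈ τ.2ᶜ, dirSign j (insert j τ.2) * (γ (cubeBelow j τ) - γ (cubeAbove j τ)) := by
  have h_eval (π : ElemCube n) : ∑ ρ ∈ A, (Pi.single π 1 : ElemCube n → ℤ) ρ * γ ρ = γ π := by
    by_cases hπ : π ∈ A
    · simp [Pi.single_apply, hπ]
    · simp [Pi.single_apply, hπ, hγ π hπ]
  simp only [coboundary_single, sum_mul]
  rw [sum_comm]
  refine sum_congr rfl fun j _ => ?_
  rw [← h_eval (cubeBelow j τ), ← h_eval (cubeAbove j τ), ← sum_sub_distrib, mul_sum]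
  exact sum_congr rfl fun ρ _ => by ring

theorem dimSignMatrix_mul_boundaryMatrix (X : Finset (Fin n → ℤ)) :
    dimSignMatrix X * boundaryMatrix X = -(boundaryMatrix X * dimSignMatrix X) := by
  ext τ σ
  rw [dimSignMatrix, Matrix.neg_apply, diagonal_mul, mul_diagonal]
  by_cases h : boundaryMatrix X τ σ = 0
  · rw [h, mul_zero, zero_mul, neg_zero]
  · obtain ⟨k, hk, h_face⟩ := exists_ne_zero_of_sum_ne_zero h
    have h_dim : #σ.1.2 = #τ.1.2 + 1 := by
      rw [← card_erase_add_one hk]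
      by_contra hne
      refine right_ne_zero_of_mul h_face ?_
      rw [Pi.single_eq_of_ne, Pi.single_eq_of_ne, sub_self]
      · rintro h
        exact hne (h ▸ rfl)
      · rintro h
        exact hne (h ▸ rfl)
    rw [h_dim, pow_succ]
    ring

theorem chainMatrix_sub_chainMatrix {X : Finset (Fin n → ℤ)}
    {f g : (Fin n → ℤ) → (Fin n → ℤ)} (hfX : MapsInto X X f) (hgX : MapsInto X X g)
    (hf : c1Cont X f) (hg : c1Cont X g) (hfg : ∀ x ∈ X, f x = g x ∨ c1Adj (f x) (g x)) :
    chainMatrix X g - chainMatrix X f =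
      boundaryMatrix X * prismMatrix X f g + prismMatrix X f g * boundaryMatrix X := by
  ext τ ⟨σ, hσ⟩
  have hσX := mem_cubesIn.1 hσ
  have h_cont : c1Cont (eCube (prismCube σ).1 (prismCube σ).2) (prismMap f g) :=
    c1Cont_prismMap (hf.mono hσX) (hg.mono hσX) fun x hx => hfg x (hσX hx)
  have h_support : ∀ ρ ∉ cubesIn X, imageCoeff (prismMap f g) ρ (prismCube σ) = 0 := by
    intro ρ hρ
    by_contra hne
    rw [mem_cubesIn, ← image_eCube_of_imageCoeff_ne_zero h_cont hne, image_subset_iff] at hρ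
    refine hρ fun y hy => ?_
    have hyX := hσX (mem_eCube_prismCube.1 hy).2
    rw [prismMap]
    split_ifs
    exacts [hfX _ hyX, hgX _ hyX]
  have h_faces : ∀ k ∈ σ.2, upperFace k σ ∈ cubesIn X ∧ lowerFace k σ ∈ cubesIn X := fun k hk =>
    ⟨mem_cubesIn.2 ((eCube_upperFace_subset hk).trans hσX),
      mem_cubesIn.2 ((eCube_lowerFace_subset k σ).trans hσX)⟩
  have h_below : (boundaryMatrix X * prismMatrix X f g) τ ⟨σ, hσ⟩ =
      coboundary (imageCoeff (prismMap f g) τ) (prismCube σ) := by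
    rw [coboundary_imageCoeff τ.1 h_cont, ← sum_coboundary_single_mul τ.1 h_support]
    exact sum_coe_sort (cubesIn X) fun ρ =>
      coboundary (Pi.single τ.1 1) ρ * imageCoeff (prismMap f g) ρ (prismCube σ)
  have h_above : (prismMatrix X f g * boundaryMatrix X) τ ⟨σ, hσ⟩ =
      coboundary (fun ρ => imageCoeff (prismMap f g) τ (prismCube ρ)) σ := by
    rw [← sum_mul_coboundary_single h_faces]
    exact sum_coe_sort (cubesIn X) fun ρ =>
      imageCoeff (prismMap f g) τ.1 (prismCube ρ) * coboundary (Pi.single ρ 1) σ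
  rw [Matrix.add_apply, h_below, h_above, coboundary_prismCube, imageCoeff_sliceCube,
    imageCoeff_sliceCube]
  simp [prismMap, chainMatrix]

/-- The two homotopy terms have opposite traces, by cyclicity of the trace. -/
theorem trace_mul_eq_of_chainHomotopic {ι R : Type*} [Fintype ι] [CommRing R]
    {S d A B P : Matrix ι ι R} (hS : S * d = -(d * S)) (hAB : B - A = d * P + P * d) :
    trace (S * A) = trace (S * B) := by
  have h_cycle : trace (S * (P * d)) = -trace (S * (d * P)) := by
    rw [← Matrix.mul_assoc, trace_mul_comm, ← Matrix.mul_assoc, ← neg_eq_iff_eq_neg.2 hS,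
      Matrix.neg_mul, trace_neg, Matrix.mul_assoc]
  rw [eq_comm, ← sub_eq_zero, ← trace_sub, ← Matrix.mul_sub, hAB, Matrix.mul_add, trace_add,
    h_cycle, add_neg_cancel]

theorem cubLef_eq_trace {X : Finset (Fin n → ℤ)} {f : (Fin n → ℤ) → (Fin n → ℤ)}
    (hf : c1Cont X f) : cubLef X f = trace (dimSignMatrix X * chainMatrix X f) := by
  have h_trace : trace (dimSignMatrix X * chainMatrix X f) =
      ∑ σ ∈ cubesIn X, (-1) ^ #σ.2 * imageCoeff f σ σ := by
    simp only [trace, diag_apply, dimSignMatrix, diagonal_mul]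
    exact sum_coe_sort (cubesIn X) fun σ => (-1) ^ #σ.2 * imageCoeff f σ σ
  rw [h_trace, cubLef, cubesIn, sum_filter, sum_product]
  refine sum_congr rfl fun a _ => sum_congr rfl fun D _ => ?_
  by_cases h_sub : eCube a D ⊆ X
  · have hf := hf.mono h_sub
    by_cases h_image : (eCube a D).image f = eCube a D
    · rw [if_pos ⟨h_sub, h_image⟩, if_pos h_sub, cubeSign_eq_imageCoeff (σ := (a, D)) hf
        fun x hx => h_image ▸ mem_image_of_mem f hx]
    · have h_zero : imageCoeff f (a, D) (a, D) = 0 :=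
        not_not.1 (mt (image_eCube_of_imageCoeff_ne_zero hf) h_image)
      rw [if_neg fun h => h_image h.2, if_pos h_sub, h_zero, mul_zero]
  · rw [if_neg fun h => h_sub h.1, if_neg h_sub]

end Trace

theorem cubLef_eq_of_eq_or_c1Adj {n : ℕ} {X : Finset (Fin n → ℤ)}
    {f g : (Fin n → ℤ) → (Fin n → ℤ)} (hfX : MapsInto X X f) (hgX : MapsInto X X g)
    (hf : c1Cont X f) (hg : c1Cont X g) (hfg : ∀ x ∈ X, f x = g x ∨ c1Adj (f x) (g x)) :
    cubLef X f = cubLef X g := by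
  rw [cubLef_eq_trace hf, cubLef_eq_trace hg]
  exact trace_mul_eq_of_chainHomotopic (dimSignMatrix_mul_boundaryMatrix X)
    (chainMatrix_sub_chainMatrix hfX hgX hf hg hfg)

theorem cubLef_eq_of_homotopic_general {n : ℕ} (X : Finset (Fin n → ℤ))
    (f g : (Fin n → ℤ) → (Fin n → ℤ)) (hfg : c1Homotopic X X f g) : cubLef X f = cubLef X g := by
  obtain ⟨k, H, h_maps, h_start, h_end, h_move, h_cont⟩ := hfg
  have h_stage {e : (Fin n → ℤ) → (Fin n → ℤ)} {t : ℕ} (ht : t ≤ k) (he : ∀ x ∈ X, H x t = e x) :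
      cubLef X e = cubLef X fun x => H x t := by
    refine cubLef_eq_of_eq_or_c1Adj (fun x hx => he x hx ▸ h_maps x hx t ht)
      (fun x hx => h_maps x hx t ht) (fun x hx y hy hxy => ?_) (h_cont t ht)
      fun x hx => Or.inl (he x hx).symm
    rw [← he x hx, ← he y hy]
    exact h_cont t ht x hx y hy hxy
  have h_const (t : ℕ) (ht : t ≤ k) : cubLef X (fun x => H x 0) = cubLef X fun x => H x t := by
    induction t with
    | zero => rfl
    | succ t ih =>
      have ht' := Nat.le_of_succ_le ht
      exact (ih ht').trans <| cubLef_eq_of_eq_or_c1Adj (fun x hx => h_maps x hx t ht')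
        (fun x hx => h_maps x hx _ ht) (h_cont t ht') (h_cont _ ht) fun x hx => h_move x hx t ht
  exact ((h_stage k.zero_le h_start).trans (h_const k le_rfl)).trans (h_stage le_rfl h_end).symm

/-- Let `X ⊆ ℤ^n` be a finite digital image with `c1`-adjacency, `n ≤ 3`, and let
`f, g : X → X` be `c1`-continuous self-maps that are homotopic. Then `L̄(f) = L̄(g)`. -/
theorem cubLef_eq_of_homotopic {n : ℕ} (hn : n ≤ 3) (X : Finset (Fin n → ℤ))
    (f g : (Fin n → ℤ) → (Fin n → ℤ))
    (hfX : MapsInto X X f) (hgX : MapsInto X X g)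
    (hf : c1Cont X f) (hg : c1Cont X g)
    (hfg : c1Homotopic X X f g) :
    cubLef X f = cubLef X g :=
  cubLef_eq_of_homotopic_general X f g hfg
end

section
/- Let X ⊆ ℤ^n be a finite digital image with c1-adjacency, where n ≤ 4, and let f : X → X be a c1-continuous self-map with L̄(f) ≠ 0. Then either f has a fixed point, or f has at least two distinct n-approximate fixed points; in particular there exists an elementary cube σ ⊆ X with f(σ) = σ. -/
/-!
If `f` preserved no elementary cube of `X`, every term of `L̄(f)` would vanish. A preserved cube of
dimension `0` is a fixed point. In a preserved cube of dimension `q ≥ 1`, changing the coordinates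
of `x` into those of `f x` one at a time takes at most `q ≤ n` steps inside the cube, so each of
its vertices, of which there are at least two, is an `n`-approximate fixed point.
-/

section Path

variable {n k l : ℕ} {X Y : Finset (Fin n → ℤ)} {x y z : Fin n → ℤ}

theorem c1Adj_update_iff (x : Fin n → ℤ) (j : Fin n) (v : ℤ) :
    c1Adj x (Function.update x j v) ↔ |x j - v| = 1 := by
  have off_axis (i : Fin n) (hi : i ≠ j) : |x i - Function.update x j v i| = 0 := by simp [hi]
  rw [c1Adj, Fintype.sum_eq_single j off_axis, Function.update_self]

/-- The points `x` and `y` are joined by a `c1`-path in `X` of length at most `k`. Paths are encoded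
as in `nApproxFix`, so that `nApproxFix X f k x` unfolds to `C1Joined X k x (f x)`. -/
def C1Joined (X : Finset (Fin n → ℤ)) (k : ℕ) (x y : Fin n → ℤ) : Prop :=
  ∃ (m : ℕ) (p : ℕ → (Fin n → ℤ)), m ≤ k ∧ p 0 = x ∧ p m = y ∧
    (∀ t ≤ m, p t ∈ X) ∧
    (∀ t, t + 1 ≤ m → (p t = p (t + 1) ∨ c1Adj (p t) (p (t + 1))))

namespace C1Joined

theorem refl (hx : x ∈ X) : C1Joined X 0 x x :=
  ⟨0, fun _ => x, le_rfl, rfl, rfl, fun _ _ => hx, fun _ _ => .inl rfl⟩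

theorem mono (h : C1Joined X k x y) (hXY : X ⊆ Y) (hkl : k ≤ l) : C1Joined Y l x y := by
  obtain ⟨m, p, hm, h0, hend, hmem, hstep⟩ := h
  exact ⟨m, p, hm.trans hkl, h0, hend, fun t ht => hXY (hmem t ht), hstep⟩

theorem cons (hx : x ∈ X) (hxz : x = z ∨ c1Adj x z) (h : C1Joined X k z y) :
    C1Joined X (k + 1) x y := by
  obtain ⟨m, p, hm, rfl, hend, hmem, hstep⟩ := h
  refine ⟨m + 1, fun t => t.casesOn x p, Nat.succ_le_succ hm, rfl, hend, ?_, ?_⟩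
  · rintro (_ | t) ht
    exacts [hx, hmem t (Nat.le_of_succ_le_succ ht)]
  · rintro (_ | t) ht
    exacts [hxz, hstep t (Nat.le_of_succ_le_succ ht)]

end C1Joined

end Path

section Cube

variable {n : ℕ} {a x y : Fin n → ℤ} {D : Finset (Fin n)} {j : Fin n} {v : ℤ}

theorem mem_eCube_iff : x ∈ eCube a D ↔ ∀ i, x i = a i ∨ i ∈ D ∧ x i = a i + 1 := by
  simp only [eCube, Finset.mem_image, Finset.mem_powerset]
  constructor
  · rintro ⟨s, hsD, rfl⟩ i
    by_cases hi : i ∈ s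
    · exact .inr ⟨hsD hi, by simp [hi]⟩
    · exact .inl (by simp [hi])
  · intro hx
    refine ⟨D.filter fun i => x i = a i + 1, Finset.filter_subset _ _, funext fun i => ?_⟩
    rcases hx i with hi | ⟨hiD, hi⟩
    · simp [hi]
    · simp [hiD, hi]

theorem self_mem_eCube (a : Fin n → ℤ) (D : Finset (Fin n)) : a ∈ eCube a D :=
  mem_eCube_iff.2 fun _ => .inl rfl

theorem eCube_empty (a : Fin n → ℤ) : eCube a ∅ = {a} := by
  simp [eCube]

theorem update_mem_eCube (hx : x ∈ eCube a D) (hv : v = a j ∨ j ∈ D ∧ v = a j + 1) :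
    Function.update x j v ∈ eCube a D := by
  rw [mem_eCube_iff] at hx ⊢
  intro i
  obtain rfl | hij := eq_or_ne i j
  · simpa using hv
  · simpa [hij] using hx i

theorem mem_eCube_update_of_mem_insert (hx : x ∈ eCube a (insert j D)) :
    x ∈ eCube (Function.update a j (x j)) D := by
  rw [mem_eCube_iff] at hx ⊢
  intro i
  obtain rfl | hij := eq_or_ne i j
  · simp
  · simpa [hij] using hx i

theorem eCube_update_subset_insert (hj : j ∉ D) (hv : v = a j ∨ v = a j + 1) :
    eCube (Function.update a j v) D ⊆ eCube a (insert j D) := by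
  intro x hx
  rw [mem_eCube_iff] at hx ⊢
  intro i
  obtain rfl | hij := eq_or_ne i j
  · have hxi : x i = v := by simpa [hj] using hx i
    simpa [hxi] using hv
  · simpa [hij] using hx i

theorem eq_or_c1Adj_update_of_mem_eCube (hx : x ∈ eCube a D) (hy : y ∈ eCube a D) (j : Fin n) :
    x = Function.update x j (y j) ∨ c1Adj x (Function.update x j (y j)) := by
  rw [c1Adj_update_iff, Function.eq_update_self_iff]
  have hxj := mem_eCube_iff.1 hx j
  have hyj := mem_eCube_iff.1 hy j
  grind

theorem c1Joined_of_mem_eCube (hx : x ∈ eCube a D) (hy : y ∈ eCube a D) :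
    C1Joined (eCube a D) D.card x y := by
  induction D using Finset.induction_on generalizing a x with
  | empty =>
    obtain rfl : x = a := by simpa [eCube_empty] using hx
    obtain rfl : y = x := by simpa [eCube_empty] using hy
    exact .refl hx
  | insert j D hj ih =>
    have hyj : y j = a j ∨ y j = a j + 1 := (mem_eCube_iff.1 hy j).imp_right And.right
    have hz : Function.update x j (y j) ∈ eCube a (insert j D) :=
      update_mem_eCube hx (mem_eCube_iff.1 hy j)
    have face_path : C1Joined (eCube (Function.update a j (y j)) D) D.card
        (Function.update x j (y j)) y :=
      ih (by simpa using mem_eCube_update_of_mem_insert hz) (mem_eCube_update_of_mem_insert hy)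
    rw [Finset.card_insert_of_notMem hj]
    exact (face_path.mono (eCube_update_subset_insert hj hyj) le_rfl).cons hx
      (eq_or_c1Adj_update_of_mem_eCube hx hy j)

theorem exists_mem_eCube_ne (a : Fin n → ℤ) (hj : j ∈ D) : ∃ b ∈ eCube a D, a ≠ b :=
  ⟨Function.update a j (a j + 1), update_mem_eCube (self_mem_eCube a D) (.inr ⟨hj, rfl⟩), by simp⟩

end Cube

section InvariantCube

variable {n : ℕ} {X : Finset (Fin n → ℤ)} {f : (Fin n → ℤ) → (Fin n → ℤ)} {a x : Fin n → ℤ}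
  {D : Finset (Fin n)}

theorem nApproxFix_of_mem_eCube (hDX : eCube a D ⊆ X) (hx : x ∈ eCube a D)
    (hfx : f x ∈ eCube a D) : nApproxFix X f D.card x :=
  (c1Joined_of_mem_eCube hx hfx).mono hDX le_rfl

theorem fixed_or_two_nApproxFix_of_mapsInto_eCube (hDX : eCube a D ⊆ X)
    (hf : MapsInto (eCube a D) (eCube a D) f) :
    (∃ x ∈ X, f x = x) ∨
      ∃ x ∈ X, ∃ y ∈ X, x ≠ y ∧ nApproxFix X f D.card x ∧ nApproxFix X f D.card y := by
  have ha := self_mem_eCube a D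
  obtain rfl | ⟨j, hj⟩ := D.eq_empty_or_nonempty
  · exact .inl ⟨a, hDX ha, by simpa [eCube_empty] using hf a ha⟩
  · obtain ⟨b, hb, hab⟩ := exists_mem_eCube_ne a hj
    exact .inr ⟨a, hDX ha, b, hDX hb, hab, nApproxFix_of_mem_eCube hDX ha (hf a ha),
      nApproxFix_of_mem_eCube hDX hb (hf b hb)⟩

theorem exists_invariant_eCube_of_cubLef_ne_zero (hL : cubLef X f ≠ 0) :
    ∃ (a : Fin n → ℤ) (D : Finset (Fin n)), eCube a D ⊆ X ∧ (eCube a D).image f = eCube a D := by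
  obtain ⟨a, -, ha⟩ := Finset.exists_ne_zero_of_sum_ne_zero hL
  obtain ⟨D, -, hD⟩ := Finset.exists_ne_zero_of_sum_ne_zero ha
  exact ⟨a, D, (ite_ne_right_iff.1 hD).1⟩

end InvariantCube

theorem cubLef_ne_zero_fixed_or_approx_general {n : ℕ} (X : Finset (Fin n → ℤ))
    (f : (Fin n → ℤ) → (Fin n → ℤ)) (hL : cubLef X f ≠ 0) :
    ((∃ x ∈ X, f x = x) ∨
      ∃ x ∈ X, ∃ y ∈ X, x ≠ y ∧ nApproxFix X f n x ∧ nApproxFix X f n y) ∧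
    ∃ (a : Fin n → ℤ) (D : Finset (Fin n)),
      eCube a D ⊆ X ∧ (eCube a D).image f = eCube a D := by
  obtain ⟨a, D, hDX, hfD⟩ := exists_invariant_eCube_of_cubLef_ne_zero hL
  have hf : MapsInto (eCube a D) (eCube a D) f := Finset.image_subset_iff.1 hfD.subset
  have weaken {x : Fin n → ℤ} (hx : nApproxFix X f D.card x) : nApproxFix X f n x :=
    C1Joined.mono hx subset_rfl (card_finset_fin_le D)
  refine ⟨?_, a, D, hDX, hfD⟩
  exact (fixed_or_two_nApproxFix_of_mapsInto_eCube hDX hf).imp_right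
    fun ⟨x, hx, y, hy, hxy, hfx, hfy⟩ => ⟨x, hx, y, hy, hxy, weaken hfx, weaken hfy⟩

/-- Let `X ⊆ ℤ^n` be a finite digital image with `c1`-adjacency, `n ≤ 4`, and let
`f : X → X` be a `c1`-continuous self-map with `L̄(f) ≠ 0`. Then either `f` has a fixed
point, or `f` has at least two distinct `n`-approximate fixed points; in particular there
is an elementary cube `σ ⊆ X` with `f(σ) = σ`. -/
theorem cubLef_ne_zero_fixed_or_approx {n : ℕ} (hn : n ≤ 4) (X : Finset (Fin n → ℤ))
    (f : (Fin n → ℤ) → (Fin n → ℤ))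
    (hfX : MapsInto X X f) (hf : c1Cont X f) (hL : cubLef X f ≠ 0) :
    ((∃ x ∈ X, f x = x) ∨
      ∃ x ∈ X, ∃ y ∈ X, x ≠ y ∧ nApproxFix X f n x ∧ nApproxFix X f n y) ∧
    ∃ (a : Fin n → ℤ) (D : Finset (Fin n)),
      eCube a D ⊆ X ∧ (eCube a D).image f = eCube a D := by
  exact cubLef_ne_zero_fixed_or_approx_general X f hL
end
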